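/- arXiv:2204.10671 — 4 statements merged into one kernel-verified Lean document; each statement's English description precedes it below -/
import Mathlib

section
/- Let k ≥ 1 and q ≥ 2 be integers, let θ be a permutation of {1,…,q}, let d ∈ ℕ, and let f : {0,1}^q → {0,1} be a Boolean function such that every deterministic kOBDD with variable order θ representing f has width at least d. Then every deterministic kOBDD (with an arbitrary variable order over its n = q(⌈log₂ q⌉+1) variables) representing the partial function ord(f) has width at least d, and likewise every deterministic kOBDD representing the partial function ⊕ord(f) has width at least d. -/
set_option maxHeartbeats 1000000
/-- `binVal l a = Σ_{j=1}^l a_j 2^{l-j}` (a₁ is the most significant bit). -/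
def binVal (l : ℕ) (a : Fin l → Bool) : ℕ :=
  ∑ j : Fin l, if a j then 2 ^ (l - 1 - (j : ℕ)) else 0
/-- A deterministic kOBDD of width `w` over `n` variables: `k` layers reading in order `ord`. -/
structure KOBDD (k n w : ℕ) where
  ord : Equiv.Perm (Fin n)
  tr : Fin k → Fin n → Fin w → Bool → Fin w
  start : Fin w
  acc : Finset (Fin w)

namespace KOBDD

def layerRun {k n w : ℕ} (M : KOBDD k n w) (t : Fin k) (s : Fin w) (x : Fin n → Bool) : Fin w :=
  (List.finRange n).foldl (fun a i => M.tr t i a (x (M.ord i))) s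

def final {k n w : ℕ} (M : KOBDD k n w) (x : Fin n → Bool) : Fin w :=
  (List.finRange k).foldl (fun s t => M.layerRun t s x) M.start

def Accepts {k n w : ℕ} (M : KOBDD k n w) (x : Fin n → Bool) : Prop :=
  M.final x ∈ M.acc

def Represents {k n w : ℕ} (M : KOBDD k n w) (f : (Fin n → Bool) → Bool) : Prop :=
  ∀ x, M.Accepts x ↔ f x = true

def RepresentsPartial {k n w : ℕ} (M : KOBDD k n w) (F : (Fin n → Bool) → Option Bool) : Prop :=
  ∀ x b, F x = some b → (M.Accepts x ↔ b = true)

/-- Each layer is a commutative OBDD: for every reading order `π`, the reordered layer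
(with transitions `tr' i = tr (ord⁻¹(π i))`) computes, from every start state,
the same state transformation as the original layer. -/
def Commutative {k n w : ℕ} (M : KOBDD k n w) : Prop :=
  ∀ (π : Equiv.Perm (Fin n)) (t : Fin k) (s : Fin w) (x : Fin n → Bool),
    (List.finRange n).foldl (fun a i => M.tr t (M.ord.symm (π i)) a (x (π i))) s =
      M.layerRun t s x

end KOBDD
lemma zIdx {q l : ℕ} (i : Fin q) (j : Fin l) : (i : ℕ) * l + (j : ℕ) < q * (l + 1) :=
  calc (i : ℕ) * l + (j : ℕ) < (i : ℕ) * l + l := Nat.add_lt_add_left j.isLt _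
    _ = ((i : ℕ) + 1) * l := by ring
    _ ≤ q * l := Nat.mul_le_mul i.isLt (Nat.le_refl l)
    _ ≤ q * (l + 1) := Nat.mul_le_mul (Nat.le_refl q) (Nat.le_succ l)

lemma yIdx {q l : ℕ} (i : Fin q) : q * l + (i : ℕ) < q * (l + 1) :=
  calc q * l + (i : ℕ) < q * l + q := Nat.add_lt_add_left i.isLt _
    _ = q * (l + 1) := by ring

/-- The bit `z_{i,j}` of an input to the reordered function
(layout: `z_{1,1},…,z_{q,l}, y_1,…,y_q`). -/
def zOf (q l : ℕ) (x : Fin (q * (l + 1)) → Bool) (i : Fin q) (j : Fin l) : Bool :=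
  x ⟨(i : ℕ) * l + (j : ℕ), zIdx i j⟩

/-- The value bit `y_i` of an input to the reordered function. -/
def yOf (q l : ℕ) (x : Fin (q * (l + 1)) → Bool) (i : Fin q) : Bool :=
  x ⟨q * l + (i : ℕ), yIdx i⟩

/-- `z_{1,j} ⊕ ⋯ ⊕ z_{i,j}`. -/
def xorZ (q l : ℕ) (x : Fin (q * (l + 1)) → Bool) (i : Fin q) (j : Fin l) : Bool :=
  decide ((Finset.univ.filter (fun i' : Fin q => i' ≤ i ∧ zOf q l x i' j = true)).card % 2 = 1)

/-- `θ(i) − 1` for the plain reordering. -/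
def addrOrd (q l : ℕ) (x : Fin (q * (l + 1)) → Bool) (i : Fin q) : ℕ :=
  binVal l (zOf q l x i)

/-- `θ(i) − 1` for the xor-reordering. -/
def addrXor (q l : ℕ) (x : Fin (q * (l + 1)) → Bool) (i : Fin q) : ℕ :=
  binVal l (xorZ q l x i)

/-- The partial reordered function: defined exactly when the addresses form a
permutation of `{1,…,q}`; then position `j` of `f`'s argument is `y_{θ⁻¹(j)}`. -/
noncomputable def ordPartial (q l : ℕ) (f : (Fin q → Bool) → Bool)
    (addr : (Fin (q * (l + 1)) → Bool) → Fin q → ℕ) :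
    (Fin (q * (l + 1)) → Bool) → Option Bool := fun x =>
  if h : ∃ σ : Equiv.Perm (Fin q), ∀ i, addr x i = (σ i : ℕ) then
    some (f fun j => yOf q l x (h.choose.symm j))
  else none

/-- The partial function `ord(f)`. -/
noncomputable def ordF (q : ℕ) (f : (Fin q → Bool) → Bool) :
    (Fin (q * (Nat.clog 2 q + 1)) → Bool) → Option Bool :=
  ordPartial q (Nat.clog 2 q) f (addrOrd q (Nat.clog 2 q))

/-- The partial function `⊕ord(f)`. -/
noncomputable def xorOrdF (q : ℕ) (f : (Fin q → Bool) → Bool) :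
    (Fin (q * (Nat.clog 2 q + 1)) → Bool) → Option Bool :=
  ordPartial q (Nat.clog 2 q) f (addrXor q (Nat.clog 2 q))

/-!
Run a kOBDD for the reordered function on inputs whose address bits `z` are fixed, so that only the
value bits `y` remain free. The steps reading fixed bits become state maps that do not depend on the
input, and these can be absorbed into the neighbouring steps reading free bits; what is left is a
kOBDD of the same width reading only the `y`s, in the order `ρ` in which the original diagram visits
them. This `ρ` is known before the address bits are chosen, so they can be chosen to spell out the
permutation `θ ∘ ρ⁻¹`. The `y` read at step `m` then plays the role of the variable `θ m` of `f`.
-/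

open Equiv (Perm)

section Absorption

variable {α β S : Type*}

lemma exists_foldl_eq_foldl_filter (p : α → Prop) [DecidablePred p] (c : α → β)
    (F : α → S → β → S) {L : List α} (hL : L.Nodup) :
    ∃ (h : S → S) (G : α → S → β → S), ∀ v : α → β, (∀ i, ¬ p i → v i = c i) → ∀ s,
      L.foldl (fun s i => F i s (v i)) s =
        (L.filter p).foldl (fun s i => G i s (v i)) (h s) := by
  classical
  induction L with
  | nil => exact ⟨id, F, fun _ _ _ => rfl⟩
  | cons i L ih =>
    obtain ⟨hi, hL⟩ := List.nodup_cons.1 hL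
    obtain ⟨h, G, hG⟩ := ih hL
    by_cases hp : p i
    · refine ⟨id, Function.update G i fun s b => h (F i s b), fun v hv s => ?_⟩
      rw [List.filter_cons_of_pos (by simpa using hp), List.foldl_cons, List.foldl_cons, hG v hv,
        Function.update_self]
      refine List.foldl_ext _ _ _ fun s j hj => ?_
      rw [Function.update_of_ne (ne_of_mem_of_not_mem (List.mem_of_mem_filter hj) hi)]
    · refine ⟨fun s => h (F i s (c i)), G, fun v hv s => ?_⟩
      rw [List.filter_cons_of_neg (by simpa using hp), List.foldl_cons, hG v hv, hv i hp]

lemma exists_foldl_init_eq_foldl (h : S → S) (G : α → S → β → S) {L : List α}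
    (hL : L.Nodup) (hne : L ≠ []) :
    ∃ G' : α → S → β → S, ∀ (v : α → β) (s : S),
      L.foldl (fun s i => G i s (v i)) (h s) = L.foldl (fun s i => G' i s (v i)) s := by
  classical
  obtain ⟨i, L, rfl⟩ := List.exists_cons_of_ne_nil hne
  refine ⟨Function.update G i fun s => G i (h s), fun v s => ?_⟩
  rw [List.foldl_cons, List.foldl_cons, Function.update_self]
  refine List.foldl_ext _ _ _ fun s j hj => ?_
  rw [Function.update_of_ne (ne_of_mem_of_not_mem hj (List.nodup_cons.1 hL).1)]

open scoped Classical in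
lemma filter_finRange_eq_map_of_strictMono {q n : ℕ} {pos : Fin q → Fin n}
    (hpos : StrictMono pos) :
    (List.finRange n).filter (· ∈ Set.range pos) = (List.finRange q).map pos := by
  have hfilter : ((List.finRange n).filter (· ∈ Set.range pos)).SortedLT :=
    ((List.pairwise_lt_finRange n).filter _).sortedLT
  have hmap : ((List.finRange q).map pos).SortedLT := by
    rwa [← List.ofFn_eq_map, List.sortedLT_ofFn_iff]
  exact hfilter.eq_of_mem_iff hmap fun i => by simp

lemma exists_foldl_finRange_eq_of_strictMono {q n : ℕ} (hq : 0 < q) {pos : Fin q → Fin n}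
    (hpos : StrictMono pos) (c : Fin n → β) (F : Fin n → S → β → S) :
    ∃ G : Fin q → S → β → S, ∀ v : Fin n → β, (∀ i ∉ Set.range pos, v i = c i) → ∀ s,
      (List.finRange n).foldl (fun s i => F i s (v i)) s =
        (List.finRange q).foldl (fun s m => G m s (v (pos m))) s := by
  classical
  have hnodup := List.nodup_finRange n
  obtain ⟨h, G, hG⟩ := exists_foldl_eq_foldl_filter (· ∈ Set.range pos) c F hnodup
  have hne : (List.finRange n).filter (· ∈ Set.range pos) ≠ [] := by
    rw [filter_finRange_eq_map_of_strictMono hpos]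
    simpa [List.finRange_eq_nil_iff] using hq.ne'
  obtain ⟨G', hG'⟩ := exists_foldl_init_eq_foldl h G (hnodup.filter _) hne
  refine ⟨fun m => G' (pos m), fun v hv s => ?_⟩
  rw [hG v hv, hG', filter_finRange_eq_map_of_strictMono hpos, List.foldl_map]

end Absorption

namespace KOBDD

variable {k n q w : ℕ}

/-- The diagram computing `u ↦ M (u ∘ σ)`, obtained by reading the variable `σ i` wherever `M` reads
the variable `i`. -/
def relabel (M : KOBDD k n w) (σ : Perm (Fin n)) : KOBDD k n w :=
  { M with ord := M.ord.trans σ }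

lemma accepts_relabel (M : KOBDD k n w) (σ : Perm (Fin n)) (u : Fin n → Bool) :
    (M.relabel σ).Accepts u ↔ M.Accepts (u ∘ σ) :=
  Iff.rfl

/-- The order in which `M` visits the variables `y 0, …, y (q - 1)`: the `m`-th of them to be read
is `y (M.inducedOrder y m)`. -/
def inducedOrder (M : KOBDD k n w) (y : Fin q ↪ Fin n) : Perm (Fin q) :=
  Tuple.sort (M.ord.symm ∘ y)

lemma strictMono_ord_symm_inducedOrder (M : KOBDD k n w) (y : Fin q ↪ Fin n) :
    StrictMono fun m => M.ord.symm (y (M.inducedOrder y m)) :=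
  (Tuple.monotone_sort (M.ord.symm ∘ y)).strictMono_of_injective
    ((M.ord.symm.injective.comp y.injective).comp (M.inducedOrder y).injective)

theorem exists_restrict (hq : 0 < q) (M : KOBDD k n w) (y : Fin q ↪ Fin n) (c : Fin n → Bool) :
    ∃ M' : KOBDD k q w, M'.ord = M.inducedOrder y ∧
      ∀ u, M'.Accepts u ↔ M.Accepts (Function.extend y u c) := by
  let ρ := M.inducedOrder y
  choose G hG using fun t => exists_foldl_finRange_eq_of_strictMono hq
    (M.strictMono_ord_symm_inducedOrder y) (c ∘ M.ord) (M.tr t)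
  let M' : KOBDD k q w := ⟨ρ, G, M.start, M.acc⟩
  have layerRun_eq (t s u) : M'.layerRun t s u = M.layerRun t s (Function.extend y u c) := by
    have hfixed : ∀ i ∉ Set.range fun m => M.ord.symm (y (ρ m)),
        Function.extend y u c (M.ord i) = c (M.ord i) := by
      refine fun i hi => Function.extend_apply' _ _ _ ?_
      rintro ⟨j, hj⟩
      exact hi ⟨ρ.symm j, by simp [hj]⟩
    have hfree (m : Fin q) :
        Function.extend y u c (M.ord (M.ord.symm (y (ρ m)))) = u (ρ m) := by
      rw [Equiv.apply_symm_apply, y.injective.extend_apply]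
    refine Eq.trans ?_ (hG t (fun i => Function.extend y u c (M.ord i)) hfixed s).symm
    simp only [layerRun, M', hfree, ρ]
  refine ⟨M', rfl, fun u => ?_⟩
  simp only [Accepts, final, layerRun_eq]
  rfl

end KOBDD

section Layout

variable {q l : ℕ}

/-- The position of the value bit `y_i` among the variables of the reordered function. -/
def yPos (q l : ℕ) : Fin q ↪ Fin (q * (l + 1)) where
  toFun i := ⟨q * l + i, yIdx i⟩
  inj' i j hij := by simpa [Fin.ext_iff] using hij

/-- The position of the address bit `z_{i,j}` among the variables of the reordered function. -/
def zPos (q l : ℕ) : Fin q × Fin l ↪ Fin (q * (l + 1)) where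
  toFun ij := ⟨ij.1 * l + ij.2, zIdx ij.1 ij.2⟩
  inj' ij ij' h := finProdFinEquiv.injective <| Fin.ext <| by
    simpa [finProdFinEquiv, mul_comm, add_comm] using h

lemma zPos_lt (ij : Fin q × Fin l) : (zPos q l ij : ℕ) < q * l := by
  have := (finProdFinEquiv ij).isLt
  simpa [zPos, finProdFinEquiv, mul_comm, add_comm] using this

lemma yPos_ne_zPos (m : Fin q) (ij : Fin q × Fin l) : yPos q l m ≠ zPos q l ij := fun h =>
  (zPos_lt ij).not_ge (h ▸ Nat.le_add_right (q * l) m)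

lemma yOf_extend_yPos (v : Fin q → Bool) (c : Fin (q * (l + 1)) → Bool) :
    yOf q l (Function.extend (yPos q l) v c) = v :=
  Function.extend_comp (yPos q l).injective v c

lemma zOf_extend_yPos (v : Fin q → Bool) (c : Fin (q * (l + 1)) → Bool) :
    zOf q l (Function.extend (yPos q l) v c) = zOf q l c :=
  funext₂ fun i j => Function.extend_apply' v c (zPos q l (i, j)) fun ⟨m, hm⟩ =>
    yPos_ne_zPos m (i, j) hm

lemma zOf_surjective (q l : ℕ) : Function.Surjective (zOf q l) := fun z =>
  ⟨Function.extend (zPos q l) (Function.uncurry z) fun _ => false,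
    funext₂ fun i j => (zPos q l).injective.extend_apply (Function.uncurry z) _ (i, j)⟩

end Layout

section Reordering

variable {q l : ℕ} {addr : (Fin (q * (l + 1)) → Bool) → Fin q → ℕ}

lemma ordPartial_of_addr_eq {x : Fin (q * (l + 1)) → Bool} {σ : Perm (Fin q)}
    (f : (Fin q → Bool) → Bool) (hσ : ∀ i, addr x i = σ i) :
    ordPartial q l f addr x = some (f (yOf q l x ∘ σ.symm)) := by
  have h : ∃ τ : Perm (Fin q), ∀ i, addr x i = τ i := ⟨σ, hσ⟩
  have hchoose : h.choose = σ := Equiv.ext fun i => Fin.ext ((h.choose_spec i).symm.trans (hσ i))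
  rw [ordPartial, dif_pos h, hchoose]
  rfl

/-- The address function `addr` can be made to output any permutation by fixing the address bits,
whatever the value bits are. -/
def RealizesPerms (addr : (Fin (q * (l + 1)) → Bool) → Fin q → ℕ) : Prop :=
  ∀ σ : Perm (Fin q), ∃ z, ∀ x, zOf q l x = z → ∀ i, addr x i = σ i

theorem KOBDD.RepresentsPartial.exists_represents {k w : ℕ} {f : (Fin q → Bool) → Bool}
    {M : KOBDD k (q * (l + 1)) w} (hM : M.RepresentsPartial (ordPartial q l f addr)) (hq : 0 < q)
    (haddr : RealizesPerms addr) (θ : Perm (Fin q)) :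
    ∃ M' : KOBDD k q w, M'.ord = θ ∧ M'.Represents f := by
  let ρ := M.inducedOrder (yPos q l)
  let σ := ρ.symm.trans θ
  obtain ⟨z, hz⟩ := haddr σ
  obtain ⟨c, hc⟩ := zOf_surjective q l z
  obtain ⟨M', hord, haccepts⟩ := M.exists_restrict hq (yPos q l) c
  refine ⟨M'.relabel σ, ?_, fun u => ?_⟩
  · calc M'.ord.trans σ = ρ.trans (ρ.symm.trans θ) := by rw [hord]
      _ = θ := by rw [← Equiv.trans_assoc, Equiv.self_trans_symm, Equiv.refl_trans]
  · have hvalue : ordPartial q l f addr (Function.extend (yPos q l) (u ∘ σ) c) = some (f u) := by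
      rw [ordPartial_of_addr_eq f (hz _ ((zOf_extend_yPos _ c).trans hc)), yOf_extend_yPos,
        Function.comp_assoc, Equiv.self_comp_symm, Function.comp_id]
    exact (M'.accepts_relabel σ u).trans ((haccepts _).trans (hM _ _ hvalue))

end Reordering

section Addresses

lemma exists_binVal_eq {l v : ℕ} (hv : v < 2 ^ l) : ∃ a : Fin l → Bool, binVal l a = v := by
  let digit : Fin l → Fin 2 := finFunctionFinEquiv.symm ⟨v, hv⟩
  have bit_value (d : Fin 2) (e : ℕ) :
      (if finTwoEquiv d = true then 2 ^ e else 0) = (d : ℕ) * 2 ^ e := by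
    fin_cases d <;> simp [finTwoEquiv]
  refine ⟨fun j => finTwoEquiv (digit j.rev), ?_⟩
  calc binVal l (fun j => finTwoEquiv (digit j.rev))
      = ∑ j : Fin l, (digit j.rev : ℕ) * 2 ^ (j.rev : ℕ) :=
        Finset.sum_congr rfl fun j _ => by
          rw [Fin.val_rev, add_comm (j : ℕ), ← Nat.sub_sub]
          exact bit_value _ _
    _ = ∑ j : Fin l, (digit j : ℕ) * 2 ^ (j : ℕ) :=
        Equiv.sum_comp Fin.revPerm fun j => (digit j : ℕ) * 2 ^ (j : ℕ)
    _ = v := by rw [← finFunctionFinEquiv_apply, Equiv.apply_symm_apply]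

lemma exists_sum_Iic_eq {ι A : Type*} [PartialOrder ι] [LocallyFiniteOrderBot ι] [AddCommGroup A]
    (a : ι → A) : ∃ z : ι → A, ∀ i, ∑ j ∈ Finset.Iic i, z j = a i := by
  have : WellFoundedLT ι := StrictMono.wellFoundedLT (f := fun i : ι => (Finset.Iic i).card)
    fun _ _ hij => Finset.card_lt_card (Finset.Iic_ssubset_Iic.2 hij)
  let z : ι → A := wellFounded_lt.fix fun i z =>
    a i - ∑ j ∈ (Finset.Iio i).attach, z j (Finset.mem_Iio.1 j.2)
  have hz (i : ι) : z i = a i - ∑ j ∈ Finset.Iio i, z j := by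
    rw [← Finset.sum_attach]
    exact wellFounded_lt.fix_eq _ i
  refine ⟨z, fun i => ?_⟩
  rw [← Finset.add_sum_Iio_eq_sum_Iic, hz, sub_add_cancel]

lemma exists_prefix_parity_eq {q : ℕ} (a : Fin q → Bool) :
    ∃ z : Fin q → Bool, ∀ i,
      decide ((Finset.univ.filter fun i' : Fin q => i' ≤ i ∧ z i' = true).card % 2 = 1) = a i := by
  obtain ⟨z, hz⟩ := exists_sum_Iic_eq fun i => if a i then (1 : ZMod 2) else 0
  have ite_eq_self (t : ZMod 2) : (if t = 1 then 1 else 0) = t := by decide +revert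
  refine ⟨fun i => decide (z i = 1), fun i => ?_⟩
  have hcard : ((Finset.univ.filter fun i' : Fin q =>
      i' ≤ i ∧ decide (z i' = 1) = true).card : ZMod 2) = if a i then 1 else 0 := by
    simp only [decide_eq_true_eq, ← Finset.filter_filter, Finset.natCast_card_filter, ite_eq_self,
      Finset.filter_ge_eq_Iic, hz]
  rw [Bool.eq_iff_iff, decide_eq_true_iff, ← Nat.odd_iff, ← ZMod.natCast_eq_one_iff_odd, hcard]
  cases a i <;> simp

variable {q l : ℕ}

lemma realizesPerms_addrOrd (hl : q ≤ 2 ^ l) : RealizesPerms (addrOrd q l) := fun σ => by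
  choose a ha using fun i => exists_binVal_eq ((σ i).isLt.trans_le hl)
  exact ⟨a, fun x hx i => by rw [addrOrd, hx, ha]⟩

lemma realizesPerms_addrXor (hl : q ≤ 2 ^ l) : RealizesPerms (addrXor q l) := fun σ => by
  choose a ha using fun i => exists_binVal_eq ((σ i).isLt.trans_le hl)
  choose z hz using fun j => exists_prefix_parity_eq fun i => a i j
  refine ⟨fun i j => z j i, fun x hx i => ?_⟩
  have hxor : xorZ q l x i = a i := funext fun j => by rw [xorZ, hx, hz]
  rw [addrXor, hxor, ha]

end Addresses

/-- a lower bound for `f` with a fixed order `θ` transfers to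
lower bounds for `ord(f)` and `⊕ord(f)` with arbitrary orders. -/
theorem stmt0 (k q d : ℕ) (hk : 1 ≤ k) (hq : 2 ≤ q) (θ : Equiv.Perm (Fin q))
    (f : (Fin q → Bool) → Bool)
    (hlow : ∀ (w : ℕ) (M : KOBDD k q w), M.ord = θ → M.Represents f → d ≤ w) :
    (∀ (w : ℕ) (M : KOBDD k (q * (Nat.clog 2 q + 1)) w),
        M.RepresentsPartial (ordF q f) → d ≤ w) ∧
    (∀ (w : ℕ) (M : KOBDD k (q * (Nat.clog 2 q + 1)) w),
        M.RepresentsPartial (xorOrdF q f) → d ≤ w) := by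
  have hq0 : 0 < q := by lia
  have hl : q ≤ 2 ^ Nat.clog 2 q := Nat.le_pow_clog one_lt_two q
  constructor
  · intro w M hM
    obtain ⟨M', hord, hrep⟩ := hM.exists_represents hq0 (realizesPerms_addrOrd hl) θ
    exact hlow w M' hord hrep
  · intro w M hM
    obtain ⟨M', hord, hrep⟩ := hM.exists_represents hq0 (realizesPerms_addrXor hl) θ
    exact hlow w M' hord hrep
end

section
/- Let k ≥ 1 and q ≥ 2 be integers and f : {0,1}^q → {0,1} a Boolean function. If there is a commutative deterministic kOBDD of width d representing f, then there exist deterministic kOBDDs of width at most 2^{⌈log₂ q⌉}·d (in particular at most 2qd) representing the partial function ord(f) and the partial function ⊕ord(f), respectively. -/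
set_option maxHeartbeats 1000000
/-! The simulating kOBDD reads its input in blocks `z_{i,1}, …, z_{i,l}, y_i` and keeps, next to a
state of the given kOBDD `M`, a register of `l` bits. After the address bits of block `i` the
register holds `θ(i) - 1`, so `y_i` can be fed to `M` as its variable with number `θ(i)`. Over a
layer `M` thus reads its variables in the order `θ(1), …, θ(q)`, and commutativity makes this
equivalent to reading them in its own order. Register and state together take `2 ^ l * d` values.

The register cannot be cleared between layers, so the first block of a layer has to overwrite
whatever the previous layer has left in it. -/

theorem finRange_mul_eq_flatMap (m n : ℕ) :
    List.finRange (m * n) =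
      (List.finRange m).flatMap fun i => (List.finRange n).map fun j => finProdFinEquiv (i, j) := by
  have index_eq (i : Fin m) (j : Fin n) (h : (i : ℕ) * n + j < m * n) :
      (⟨i * n + j, h⟩ : Fin (m * n)) = finProdFinEquiv (i, j) := by
    ext
    simp only [finProdFinEquiv_apply_val]
    ring
  rw [← List.ofFn_id, List.ofFn_mul]
  simp only [List.ofFn_eq_map, id, index_eq, List.flatMap_def]

theorem foldl_finRange_mul {S : Type*} {m n : ℕ} (u : S → Fin (m * n) → S) (s : S) :
    (List.finRange (m * n)).foldl u s =
      (List.finRange m).foldl (fun s i =>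
        (List.finRange n).foldl (fun s j => u s (finProdFinEquiv (i, j))) s) s := by
  simp only [finRange_mul_eq_flatMap, List.foldl_flatMap, List.foldl_map]

theorem foldl_finRange_succ_last {S : Type*} {n : ℕ} (u : S → Fin (n + 1) → S) (s : S) :
    (List.finRange (n + 1)).foldl u s =
      u ((List.finRange n).foldl (fun s i => u s i.castSucc) s) (Fin.last n) := by
  simp only [List.finRange_succ_last, List.foldl_append, List.foldl_map, List.foldl_cons,
    List.foldl_nil]

theorem foldl_finRange_rel {S T : Type*} (R : ℕ → S → T → Prop) {n : ℕ} {u : S → Fin n → S}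
    {v : T → Fin n → T} {s : S} {s' : T} (zero : R 0 s s')
    (succ : ∀ (i : Fin n) s s', R i s s' → R (i + 1) (u s i) (v s' i)) :
    R n ((List.finRange n).foldl u s) ((List.finRange n).foldl v s') := by
  induction n with
  | zero => simpa using zero
  | succ n ih =>
    rw [foldl_finRange_succ_last, foldl_finRange_succ_last]
    exact succ (Fin.last n) _ _ (ih fun i => succ i.castSucc)

theorem foldl_update_apply {ι β : Type*} [DecidableEq ι] (h : ι → β → β) {L : List ι}
    (hL : L.Nodup) (a : ι → β) (j : ι) :
    L.foldl (fun a i => Function.update a i (h i (a i))) a j =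
      if j ∈ L then h j (a j) else a j := by
  induction L generalizing a with
  | nil => simp
  | cons i L ih =>
    obtain ⟨hi, hL⟩ := List.nodup_cons.mp hL
    rw [List.foldl_cons, ih hL]
    by_cases hj : j = i
    · subst hj
      simp [hi]
    · simp [hj]

theorem foldl_finRange_update {β : Type*} {n : ℕ} (h : Fin n → β → β) (a : Fin n → β) :
    (List.finRange n).foldl (fun a i => Function.update a i (h i (a i))) a =
      fun j => h j (a j) := by
  ext j
  rw [foldl_update_apply h (List.nodup_finRange n), if_pos (List.mem_finRange j)]

/-- `A` is the sequence of accumulators obtained by scanning `z` with the update rule `g`. The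
accumulator preceding the first step is left arbitrary, so `g` has to ignore it in that step. -/
def IsScan {q : ℕ} {α β : Type*} (g : Fin q → β → α → β) (z : Fin q → α) (A : Fin q → β) : Prop :=
  ∀ (i : Fin q) (c : β), (∀ i' : Fin q, (i' : ℕ) + 1 = i → c = A i') → g i c (z i) = A i

theorem isScan_self {q : ℕ} {α : Type*} (z : Fin q → α) : IsScan (fun _ _ b => b) z z :=
  fun _ _ _ => rfl

/-- The update rule computing running XORs, which starts afresh at index `0`. -/
def xorUpdate {q : ℕ} (i : Fin q) (c b : Bool) : Bool :=
  if (i : ℕ) = 0 then b else xor c b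

theorem card_filter_le_and {ι : Type*} [Fintype ι] [PartialOrder ι] [DecidableLE ι] [DecidableLT ι]
    (z : ι → Bool) (i : ι) :
    (Finset.univ.filter fun i' => i' ≤ i ∧ z i' = true).card =
      (Finset.univ.filter fun i' => i' < i ∧ z i' = true).card + (z i).toNat := by
  classical
  cases hz : z i with
  | false =>
    have lt_iff (i' : ι) : i' ≤ i ∧ z i' = true ↔ i' < i ∧ z i' = true := by
      grind [le_iff_lt_or_eq]
    simp only [lt_iff, Bool.toNat_false, add_zero]
  | true =>
    have filter_eq : (Finset.univ.filter fun i' => i' ≤ i ∧ z i' = true) =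
        insert i (Finset.univ.filter fun i' => i' < i ∧ z i' = true) := by
      grind [le_iff_lt_or_eq]
    rw [filter_eq, Finset.card_insert_of_notMem (by simp), Bool.toNat_true]

theorem decide_add_toNat_mod_two (m : ℕ) (b : Bool) :
    decide ((m + b.toNat) % 2 = 1) = xor (decide (m % 2 = 1)) b := by
  cases b <;> grind

theorem isScan_xorUpdate {q : ℕ} (z : Fin q → Bool) :
    IsScan xorUpdate z fun i =>
      decide ((Finset.univ.filter fun i' : Fin q => i' ≤ i ∧ z i' = true).card % 2 = 1) := by
  intro i c hc
  beta_reduce at hc ⊢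
  rw [card_filter_le_and, decide_add_toNat_mod_two, xorUpdate]
  split_ifs with hi
  · have not_lt (i' : Fin q) : ¬ i' < i := by
      rw [Fin.lt_def]
      lia
    simp [not_lt]
  · let p : Fin q := ⟨i - 1, by lia⟩
    have hp : (p : ℕ) + 1 = i := Nat.sub_add_cancel (Nat.pos_of_ne_zero hi)
    have lt_iff (i' : Fin q) : i' < i ↔ i' ≤ p := by
      rw [Fin.lt_def, Fin.le_def]
      lia
    simp only [hc p hp, lt_iff]

/-- The reading order `z_{1,1}, …, z_{1,l}, y_1, z_{2,1}, …, z_{q,l}, y_q` of the inputs of the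
reordered functions. -/
def blockOrder (q l : ℕ) : Equiv.Perm (Fin (q * (l + 1))) :=
  calc Fin (q * (l + 1))
    _ ≃ Fin q × Fin (l + 1) := finProdFinEquiv.symm
    _ ≃ Fin q × (Fin l ⊕ Fin 1) := Equiv.prodCongrRight fun _ => finSumFinEquiv.symm
    _ ≃ Fin q × Fin l ⊕ Fin q × Fin 1 := Equiv.prodSumDistrib _ _ _
    _ ≃ Fin (q * l) ⊕ Fin q := Equiv.sumCongr finProdFinEquiv (Equiv.prodUnique _ _)
    _ ≃ Fin (q * l + q) := finSumFinEquiv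
    _ ≃ Fin (q * (l + 1)) := finCongr (Nat.mul_succ q l).symm

section blockOrder

variable {q l : ℕ} (x : Fin (q * (l + 1)) → Bool) (i : Fin q)

theorem apply_blockOrder_castSucc (j : Fin l) :
    x (blockOrder q l (finProdFinEquiv (i, j.castSucc))) = zOf q l x i j := by
  refine congrArg x (Fin.ext ?_)
  simp [blockOrder, Trans.trans, add_comm, mul_comm]

theorem apply_blockOrder_last :
    x (blockOrder q l (finProdFinEquiv (i, Fin.last l))) = yOf q l x i := by
  refine congrArg x (Fin.ext ?_)
  simp [blockOrder, Trans.trans]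

end blockOrder

namespace KOBDD

section ofEquiv

variable {k n w : ℕ} {S : Type*} (e : S ≃ Fin w) (ord : Equiv.Perm (Fin n))
  (tr : Fin k → Fin n → S → Bool → S) (start : S) (acc : Finset S)

/-- The kOBDD given by transitions on an arbitrary state set `S`, whose elements are numbered by
`e`. -/
def ofEquiv : KOBDD k n w where
  ord := ord
  tr t i s b := e (tr t i (e.symm s) b)
  start := e start
  acc := acc.map e.toEmbedding

theorem ofEquiv_layerRun (t : Fin k) (s : S) (x : Fin n → Bool) :
    (ofEquiv e ord tr start acc).layerRun t (e s) x =
      e ((List.finRange n).foldl (fun s i => tr t i s (x (ord i))) s) :=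
  List.foldl_hom e fun s i => by simp only [ofEquiv, Equiv.symm_apply_apply]

theorem ofEquiv_accepts_iff (x : Fin n → Bool) :
    (ofEquiv e ord tr start acc).Accepts x ↔
      (List.finRange k).foldl (fun s t =>
        (List.finRange n).foldl (fun s i => tr t i s (x (ord i))) s) start ∈ acc := by
  have final_eq : (ofEquiv e ord tr start acc).final x =
      e ((List.finRange k).foldl (fun s t =>
        (List.finRange n).foldl (fun s i => tr t i s (x (ord i))) s) start) :=
    List.foldl_hom e fun s t => ofEquiv_layerRun e ord tr start acc t s x
  rw [Accepts, final_eq]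
  exact Finset.mem_map' e.toEmbedding

end ofEquiv

variable {k q d l : ℕ} {M : KOBDD k q d}

theorem Commutative.foldl_reorder (hM : M.Commutative) (σ : Equiv.Perm (Fin q)) (t : Fin k)
    (s : Fin d) (y : Fin q → Bool) :
    (List.finRange q).foldl (fun s i => M.tr t (M.ord.symm (σ i)) s (y i)) s =
      M.layerRun t s fun j => y (σ.symm j) := by
  simpa only [Equiv.symm_apply_apply] using hM σ t s fun j => y (σ.symm j)

variable (M)

/-- The transition of `M` in layer `t` on reading `b` as its variable with 0-based number `r`. If
there is no such variable, which never happens on the domain of a reordered function, the state is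
kept. -/
def stepAt (t : Fin k) (r : ℕ) (s : Fin d) (b : Bool) : Fin d :=
  if h : r < q then M.tr t (M.ord.symm ⟨r, h⟩) s b else s

theorem stepAt_val (t : Fin k) (r : Fin q) (s : Fin d) (b : Bool) :
    M.stepAt t r s b = M.tr t (M.ord.symm r) s b :=
  dif_pos r.isLt

variable (g : Fin q → Bool → Bool → Bool)

/-- The simulation of layer `t` of `M` on the `j`-th bit `b` of block `i`. The first `l` bits update
the address register, bit by bit, through `g i`; the last one is passed to `M` as the variable
addressed by the register. -/
def simStep (t : Fin k) (i : Fin q) (j : Fin (l + 1)) (s : (Fin l → Bool) × Fin d) (b : Bool) :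
    (Fin l → Bool) × Fin d :=
  match finSuccEquivLast j with
  | some j => (Function.update s.1 j (g i (s.1 j) b), s.2)
  | none => (s.1, M.stepAt t (binVal l s.1) s.2 b)

theorem foldl_simStep (t : Fin k) (i : Fin q) (s : (Fin l → Bool) × Fin d)
    (v : Fin (l + 1) → Bool) {a : Fin l → Bool} (ha : ∀ j, g i (s.1 j) (v j.castSucc) = a j) :
    (List.finRange (l + 1)).foldl (fun s j => M.simStep g t i j s (v j)) s =
      (a, M.stepAt t (binVal l a) s.2 (v (Fin.last l))) := by
  have register_eq :
      (List.finRange l).foldl (fun s j => M.simStep g t i j.castSucc s (v j.castSucc)) s =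
        (a, s.2) := by
    rw [← funext ha, ← foldl_finRange_update fun j c => g i c (v j.castSucc)]
    exact List.foldl_hom (fun a => (a, s.2)) fun a j => by
      simp only [simStep, finSuccEquivLast_castSucc]
  rw [foldl_finRange_succ_last, register_eq]
  simp only [simStep, finSuccEquivLast_last]

variable {M g} in
theorem foldl_foldl_simStep_snd (hM : M.Commutative) (v : Fin q → Fin (l + 1) → Bool)
    {A : Fin q → Fin l → Bool} (hA : ∀ j, IsScan g (fun i => v i j.castSucc) fun i => A i j)
    {σ : Equiv.Perm (Fin q)} (hσ : ∀ i, binVal l (A i) = σ i) (t : Fin k)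
    (s : (Fin l → Bool) × Fin d) :
    ((List.finRange q).foldl (fun s i =>
        (List.finRange (l + 1)).foldl (fun s j => M.simStep g t i j s (v i j)) s) s).2 =
      M.layerRun t s.2 fun j => v (σ.symm j) (Fin.last l) := by
  rw [← hM.foldl_reorder σ t s.2 fun i => v i (Fin.last l)]
  refine (foldl_finRange_rel (fun n (s : (Fin l → Bool) × Fin d) s' =>
    (∀ i : Fin q, (i : ℕ) + 1 = n → s.1 = A i) ∧ s.2 = s') ⟨by simp, rfl⟩ ?_).2
  rintro i s _ ⟨register_eq, rfl⟩
  have ha (j : Fin l) : g i (s.1 j) (v i j.castSucc) = A i j :=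
    hA j i _ fun i' hi' => congrFun (register_eq i' hi') j
  rw [M.foldl_simStep g t i s (v i) ha, hσ, stepAt_val]
  refine ⟨fun i' hi' => ?_, rfl⟩
  rw [Fin.ext (Nat.succ_injective hi')]

/-- The kOBDD simulating `M` on the inputs of a reordered function, where the addresses are scanned
by `g`. -/
noncomputable def simulation (l : ℕ) : KOBDD k (q * (l + 1)) (2 ^ l * d) :=
  ofEquiv (Fintype.equivFinOfCardEq (by simp)) (blockOrder q l)
    (fun t p => M.simStep g t (finProdFinEquiv.symm p).1 (finProdFinEquiv.symm p).2)
    (fun _ => false, M.start) (Finset.univ ×ˢ M.acc)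

variable {M g}

theorem simulation_accepts_iff (hM : M.Commutative) {x : Fin (q * (l + 1)) → Bool}
    {A : Fin q → Fin l → Bool} (hA : ∀ j, IsScan g (fun i => zOf q l x i j) fun i => A i j)
    {σ : Equiv.Perm (Fin q)} (hσ : ∀ i, binVal l (A i) = σ i) :
    (M.simulation g l).Accepts x ↔ M.Accepts fun j => yOf q l x (σ.symm j) := by
  let v (i : Fin q) (j : Fin (l + 1)) : Bool := x (blockOrder q l (finProdFinEquiv (i, j)))
  have layer_snd (t : Fin k) (s : (Fin l → Bool) × Fin d) :
      ((List.finRange q).foldl (fun s i =>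
        (List.finRange (l + 1)).foldl (fun s j => M.simStep g t i j s (v i j)) s) s).2 =
      M.layerRun t s.2 fun j => yOf q l x (σ.symm j) := by
    simp only [← apply_blockOrder_castSucc] at hA
    simp only [← apply_blockOrder_last]
    exact foldl_foldl_simStep_snd hM v hA hσ t s
  rw [simulation, ofEquiv_accepts_iff, Finset.mem_product, Accepts, final]
  simp only [foldl_finRange_mul, Equiv.symm_apply_apply, Finset.mem_univ, true_and]
  rw [← List.foldl_hom Prod.snd (g₂ := fun s t => M.layerRun t s fun j => yOf q l x (σ.symm j))
    fun s t => (layer_snd t s).symm]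

theorem simulation_representsPartial (hM : M.Commutative) {f : (Fin q → Bool) → Bool}
    (hf : M.Represents f) {A : (Fin (q * (l + 1)) → Bool) → Fin q → Fin l → Bool}
    (hA : ∀ x j, IsScan g (fun i => zOf q l x i j) fun i => A x i j) :
    (M.simulation g l).RepresentsPartial (ordPartial q l f fun x i => binVal l (A x i)) := by
  intro x b hb
  unfold ordPartial at hb
  split_ifs at hb with h
  rw [← Option.some.inj hb, ← hf]
  exact simulation_accepts_iff hM (hA x) h.choose_spec

end KOBDD

/-- from a commutative kOBDD of width `d` for `f` one gets kOBDDs of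
width at most `2^{⌈log₂ q⌉}·d ≤ 2qd` for `ord(f)` and `⊕ord(f)`. -/
theorem stmt1 (k q d : ℕ) (hk : 1 ≤ k) (hq : 2 ≤ q)
    (f : (Fin q → Bool) → Bool)
    (M : KOBDD k q d) (hrep : M.Represents f) (hcomm : M.Commutative) :
    (∃ w : ℕ, w ≤ 2 ^ Nat.clog 2 q * d ∧
        ∃ N : KOBDD k (q * (Nat.clog 2 q + 1)) w, N.RepresentsPartial (ordF q f)) ∧
    (∃ w : ℕ, w ≤ 2 ^ Nat.clog 2 q * d ∧
        ∃ N : KOBDD k (q * (Nat.clog 2 q + 1)) w, N.RepresentsPartial (xorOrdF q f)) := by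
  refine ⟨⟨_, le_rfl, M.simulation (fun _ _ b => b) _, ?_⟩,
    ⟨_, le_rfl, M.simulation xorUpdate _, ?_⟩⟩
  · exact KOBDD.simulation_representsPartial hcomm hrep fun _ _ => isScan_self _
  · exact KOBDD.simulation_representsPartial hcomm hrep fun _ _ => isScan_xorUpdate _
end

section
/- There is an absolute constant c with the following property. Let n ≥ 1 and w ≥ 2 be integers, let f : {0,1}ⁿ → {0,1}, and suppose there are integers C₁,…,C_n such that for all x ∈ {0,1}ⁿ one has f(x) = 1 if and only if Σ_{i=1}^n C_i·x_i ≡ 0 (mod w). Then for every ε ∈ (0, 1/2) there is a commutative quantum OBDD of width at most c·(1/ε)·ln(2w) that accepts every x with f(x) = 1 with probability 1 and accepts every x with f(x) = 0 with probability at most ε. In particular, f has a commutative bounded-error quantum OBDD of width O(log w). -/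
set_option maxHeartbeats 1000000
/-- A quantum OBDD of width `w` over `n` Boolean variables. -/
structure QOBDD (n w : ℕ) where
  ord : Equiv.Perm (Fin n)
  G : Fin n → Bool → Matrix.unitaryGroup (Fin w) ℂ
  start : Fin w
  acc : Finset (Fin w)

namespace QOBDD

noncomputable def finalVec {n w : ℕ} (M : QOBDD n w) (x : Fin n → Bool) : Fin w → ℂ :=
  (List.finRange n).foldl
    (fun ψ i => Matrix.mulVec (M.G i (x (M.ord i)) : Matrix (Fin w) (Fin w) ℂ) ψ)
    (Pi.single M.start 1)

noncomputable def acceptProb {n w : ℕ} (M : QOBDD n w) (x : Fin n → Bool) : ℝ :=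
  ∑ j ∈ M.acc, Complex.normSq (M.finalVec x j)

/-- `M` represents the total function `f` with margin `ε`. -/
def Represents {n w : ℕ} (M : QOBDD n w) (ε : ℝ) (f : (Fin n → Bool) → Bool) : Prop :=
  ∀ x, (f x = true → 1 / 2 + ε ≤ M.acceptProb x) ∧
       (f x = false → M.acceptProb x ≤ 1 / 2 - ε)

/-- `M` represents the partial function `F` with margin `ε`. -/
def RepresentsPartial {n w : ℕ} (M : QOBDD n w) (ε : ℝ)
    (F : (Fin n → Bool) → Option Bool) : Prop :=
  ∀ x, (F x = some true → 1 / 2 + ε ≤ M.acceptProb x) ∧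
       (F x = some false → M.acceptProb x ≤ 1 / 2 - ε)

/-- The QOBDD obtained by reordering: order `π`, matrices `G' i = G (ord⁻¹ (π i))`. -/
def reorder {n w : ℕ} (M : QOBDD n w) (π : Equiv.Perm (Fin n)) : QOBDD n w :=
  ⟨π, fun i => M.G (M.ord.symm (π i)), M.start, M.acc⟩

end QOBDD

/-!
Label `n`-bit inputs by elements of a finite abelian group `A`, one summand per variable, so that
the label of `x` vanishes exactly when `f x = true`. Choose `t` characters `k j` of `A`, prepare the
uniform superposition `U e₀` of `t` basis states, let each variable multiply the `j`-th amplitude by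
`k j` of its summand, and undo `U`. The amplitude of returning to `e₀` is the average of the `k j`
at the label of `x`: it is `1` when the label is `0`. By Hoeffding's inequality and a union bound
over the nonzero labels and the four directions `±1, ±i`, some choice of `t = O(log |A| / ε)`
characters makes every other average at most `√ε` in modulus. The gates are values
of a representation of `A`, hence commute.
-/

open Finset

section Concentration

variable {ι κ P : Type*} [Fintype ι] [Fintype κ] [Fintype P]

lemma sum_exp_mul_le_of_sum_eq_zero {X : ι → ℝ} (hX : ∀ i, |X i| ≤ 1) (h0 : ∑ i, X i = 0)
    (r : ℝ) :
    ∑ i, Real.exp (X i * r) ≤ Fintype.card ι * Real.exp (r ^ 2 / 2) := by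
  calc ∑ i, Real.exp (X i * r) ≤ ∑ i, (Real.cosh r + X i * Real.sinh r) :=
        sum_le_sum fun i _ => Real.exp_mul_le_cosh_add_mul_sinh (hX i) r
    _ = Fintype.card ι * Real.cosh r := by
        rw [sum_add_distrib, ← sum_mul, h0, zero_mul, add_zero, sum_const, card_univ,
          nsmul_eq_mul]
    _ ≤ Fintype.card ι * Real.exp (r ^ 2 / 2) := by
        gcongr
        exact Real.cosh_le_exp_half_sq r

lemma sum_exp_sum_mul_le_of_sum_eq_zero [DecidableEq κ] {X : ι → ℝ} (hX : ∀ i, |X i| ≤ 1)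
    (h0 : ∑ i, X i = 0) (r : ℝ) :
    ∑ k : κ → ι, Real.exp ((∑ j, X (k j)) * r) ≤
      Fintype.card (κ → ι) * Real.exp (Fintype.card κ * (r ^ 2 / 2)) := by
  calc ∑ k : κ → ι, Real.exp ((∑ j, X (k j)) * r)
      = ∑ k : κ → ι, ∏ j, Real.exp (X (k j) * r) := by simp only [sum_mul, Real.exp_sum]
    _ = (∑ i, Real.exp (X i * r)) ^ Fintype.card κ := by
        rw [← card_univ, ← prod_const, prod_univ_sum, Fintype.piFinset_univ]
    _ ≤ (Fintype.card ι * Real.exp (r ^ 2 / 2)) ^ Fintype.card κ := by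
        gcongr
        exact sum_exp_mul_le_of_sum_eq_zero hX h0 r
    _ = Fintype.card (κ → ι) * Real.exp (Fintype.card κ * (r ^ 2 / 2)) := by
        rw [mul_pow, ← Real.exp_nat_mul, Fintype.card_fun, Nat.cast_pow]

lemma exists_forall_sum_le_of_card_le_exp [Nonempty ι] {X : P → ι → ℝ}
    (hX : ∀ p i, |X p i| ≤ 1) (h0 : ∀ p, ∑ i, X p i = 0) {r : ℝ} (hr : 0 < r)
    (hP : Fintype.card P ≤ Real.exp (Fintype.card κ * (r ^ 2 / 2))) :
    ∃ k : κ → ι, ∀ p, ∑ j, X p (k j) ≤ Fintype.card κ * r := by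
  classical
  set E := Real.exp (Fintype.card κ * (r ^ 2 / 2)) with hE
  have total : ∑ k : κ → ι, ∑ p, Real.exp ((∑ j, X p (k j)) * r) ≤
      ∑ _k : κ → ι, Fintype.card P * E := by
    calc ∑ k : κ → ι, ∑ p, Real.exp ((∑ j, X p (k j)) * r)
        = ∑ p, ∑ k : κ → ι, Real.exp ((∑ j, X p (k j)) * r) := sum_comm
      _ ≤ ∑ _p : P, Fintype.card (κ → ι) * E :=
          sum_le_sum fun p _ => sum_exp_sum_mul_le_of_sum_eq_zero (hX p) (h0 p) r
      _ = ∑ _k : κ → ι, Fintype.card P * E := by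
          simp only [sum_const, card_univ, nsmul_eq_mul]
          ring
  obtain ⟨k, -, hk⟩ := exists_le_of_sum_le univ_nonempty total
  refine ⟨k, fun p => le_of_mul_le_mul_right (Real.exp_le_exp.1 ?_) hr⟩
  calc Real.exp ((∑ j, X p (k j)) * r)
      ≤ ∑ q, Real.exp ((∑ j, X q (k j)) * r) :=
        single_le_sum (f := fun q => Real.exp ((∑ j, X q (k j)) * r))
          (fun _ _ => (Real.exp_pos _).le) (mem_univ p)
    _ ≤ E * E := hk.trans (by gcongr)
    _ = Real.exp (Fintype.card κ * r * r) := by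
        rw [hE, ← Real.exp_add]
        ring_nf

lemma normSq_le_of_forall_re_I_pow_mul_le {z : ℂ} {b : ℝ}
    (h : ∀ m : Fin 4, (Complex.I ^ (m : ℕ) * z).re ≤ b) : Complex.normSq z ≤ 2 * b ^ 2 := by
  have re_le : z.re ≤ b := by simpa using h 0
  have neg_im_le : -z.im ≤ b := by simpa using h 1
  have neg_re_le : -z.re ≤ b := by simpa using h 2
  have im_le : z.im ≤ b := by simpa [pow_succ] using h 3
  rw [Complex.normSq_apply]
  nlinarith [sq_le_sq' (by linarith) re_le, sq_le_sq' (by linarith) im_le]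

lemma exists_forall_normSq_sum_le_of_card_le_exp [Nonempty ι] {Z : P → ι → ℂ}
    (hZ : ∀ p i, ‖Z p i‖ ≤ 1) (h0 : ∀ p, ∑ i, Z p i = 0) {ε : ℝ} (hε : 0 < ε)
    (hP : 4 * Fintype.card P ≤ Real.exp (Fintype.card κ * (ε / 4))) :
    ∃ k : κ → ι, ∀ p, Complex.normSq (∑ j, Z p (k j)) ≤ ε * (Fintype.card κ : ℝ) ^ 2 := by
  have hr : √(ε / 2) ^ 2 = ε / 2 := Real.sq_sqrt (by positivity)
  let X : P × Fin 4 → ι → ℝ := fun q i => (Complex.I ^ (q.2 : ℕ) * Z q.1 i).re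
  have abs_X_le : ∀ q i, |X q i| ≤ 1 := fun q i =>
    (Complex.abs_re_le_norm _).trans (by simpa using hZ q.1 i)
  have sum_X : ∀ q, ∑ i, X q i = 0 := fun q => by
    rw [← Complex.re_sum, ← mul_sum, h0, mul_zero, Complex.zero_re]
  obtain ⟨k, hk⟩ := exists_forall_sum_le_of_card_le_exp (κ := κ) abs_X_le sum_X
    (r := √(ε / 2)) (by positivity) <| by
      rw [hr, Fintype.card_prod, Fintype.card_fin, div_div]
      push_cast
      linarith
  refine ⟨k, fun p => ?_⟩
  calc Complex.normSq (∑ j, Z p (k j)) ≤ 2 * (Fintype.card κ * √(ε / 2)) ^ 2 :=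
        normSq_le_of_forall_re_I_pow_mul_le fun m => by
          rw [mul_sum, Complex.re_sum]
          exact hk (p, m)
    _ = ε * (Fintype.card κ : ℝ) ^ 2 := by
        rw [mul_pow, hr]
        ring

lemma exists_forall_normSq_sum_addChar_le {A : Type*} [AddCommGroup A] [Finite A] {ε : ℝ}
    (hε : 0 < ε) (hA : 4 * Nat.card A ≤ Real.exp (Fintype.card κ * (ε / 4))) :
    ∃ k : κ → AddChar A ℂ, ∀ a ≠ 0,
      Complex.normSq (∑ j, k j a) ≤ ε * (Fintype.card κ : ℝ) ^ 2 := by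
  classical
  have := Fintype.ofFinite A
  have card_ne_zero_le : (Fintype.card {a : A // a ≠ 0} : ℝ) ≤ Nat.card A := by
    rw [Nat.card_eq_fintype_card]
    exact_mod_cast Fintype.card_subtype_le _
  obtain ⟨k, hk⟩ := exists_forall_normSq_sum_le_of_card_le_exp (κ := κ)
    (Z := fun (a : {a : A // a ≠ 0}) (ψ : AddChar A ℂ) => ψ a)
    (fun a ψ => (ψ.norm_apply a).le)
    (fun a => (AddChar.sum_apply_eq_ite (a : A)).trans (if_neg a.2)) hε (by linarith)
  exact ⟨k, fun a ha => hk ⟨a, ha⟩⟩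

end Concentration

section UnitaryRepresentation

open Matrix

variable {ι : Type*} [Fintype ι] [DecidableEq ι]

lemma exists_unitaryGroup_col_eq {𝕜 : Type*} [RCLike 𝕜] {v : EuclideanSpace 𝕜 ι}
    (hv : ‖v‖ = 1) (i : ι) :
    ∃ U : unitaryGroup ι 𝕜, ∀ j, (U : Matrix ι ι 𝕜) j i = v j := by
  have hv' : Orthonormal 𝕜 (({i} : Set ι).domRestrict fun _ => v) :=
    ⟨fun _ => hv, fun a b hab => (hab (Subsingleton.elim a b)).elim⟩
  obtain ⟨b, hb⟩ := hv'.exists_orthonormalBasis_extension_of_card_eq finrank_euclideanSpace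
  let e := EuclideanSpace.basisFun ι 𝕜
  refine ⟨⟨e.toBasis.toMatrix b, e.toMatrix_orthonormalBasis_mem_unitary b⟩, fun j => ?_⟩
  simp [e, Module.Basis.toMatrix_apply, hb i rfl]

lemma exists_unitaryGroup_normSq_col_eq_inv_card (i : ι) :
    ∃ U : unitaryGroup ι ℂ,
      ∀ j, Complex.normSq ((U : Matrix ι ι ℂ) j i) = (Fintype.card ι : ℝ)⁻¹ := by
  have : Nonempty ι := ⟨i⟩
  let v : EuclideanSpace ℂ ι := WithLp.toLp 2 fun _ => ((√(Fintype.card ι))⁻¹ : ℝ)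
  have hsq : (√(Fintype.card ι))⁻¹ ^ 2 = (Fintype.card ι : ℝ)⁻¹ := by
    rw [inv_pow, Real.sq_sqrt (Nat.cast_nonneg _)]
  have hv : ‖v‖ = 1 := by
    rw [EuclideanSpace.norm_eq, Real.sqrt_eq_one]
    simp [v]
  obtain ⟨U, hU⟩ := exists_unitaryGroup_col_eq hv i
  refine ⟨U, fun j => ?_⟩
  rw [hU, Complex.normSq_ofReal, ← sq, hsq]

variable {A : Type*} [AddLeftCancelMonoid A] [Finite A]

/-- The diagonal unitary representation with characters `k j`. A representation of the additive
monoid `A` is encoded as an `AddChar` with values in the unitary group. -/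
noncomputable def diagonalAddChar (k : ι → AddChar A ℂ) : AddChar A (unitaryGroup ι ℂ) where
  toFun a := ⟨diagonal fun j => k j a, mem_unitaryGroup_iff.2 <| by
    rw [star_eq_conjTranspose, diagonal_conjTranspose, diagonal_mul_diagonal, ← diagonal_one]
    congr 1
    ext j
    simp [Complex.mul_conj, Complex.normSq_eq_norm_sq]⟩
  map_zero_eq_one' := Subtype.ext <| by simp
  map_add_eq_mul' a b := Subtype.ext <| by simp [AddChar.map_add_eq_mul]

lemma inv_mul_diagonalAddChar_mul_apply (U : unitaryGroup ι ℂ) (k : ι → AddChar A ℂ) (a : A)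
    (i : ι) :
    ((U⁻¹ * diagonalAddChar k a * U : unitaryGroup ι ℂ) : Matrix ι ι ℂ) i i =
      ∑ j, Complex.normSq ((U : Matrix ι ι ℂ) j i) * k j a := by
  rw [UnitaryGroup.mul_val, UnitaryGroup.mul_val, UnitaryGroup.inv_val, mul_apply]
  refine sum_congr rfl fun j _ => ?_
  rw [diagonalAddChar, AddChar.coe_mk, mul_diagonal, star_apply, RCLike.star_def,
    Complex.normSq_eq_conj_mul_self]
  ring

lemma exists_addChar_unitaryGroup_apply_eq_average (k : ι → AddChar A ℂ) (i : ι) :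
    ∃ ρ : AddChar A (unitaryGroup ι ℂ),
      ∀ a, (ρ a : Matrix ι ι ℂ) i i = (Fintype.card ι : ℂ)⁻¹ * ∑ j, k j a := by
  obtain ⟨U, hU⟩ := exists_unitaryGroup_normSq_col_eq_inv_card i
  refine ⟨(MulAut.conj U⁻¹).toMonoidHom.compAddChar (diagonalAddChar k), fun a => ?_⟩
  calc (((MulAut.conj U⁻¹).toMonoidHom.compAddChar (diagonalAddChar k) a :
          unitaryGroup ι ℂ) : Matrix ι ι ℂ) i i
      = ((U⁻¹ * diagonalAddChar k a * U : unitaryGroup ι ℂ) : Matrix ι ι ℂ) i i := by simp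
    _ = (Fintype.card ι : ℂ)⁻¹ * ∑ j, k j a := by
        simp only [inv_mul_diagonalAddChar_mul_apply, hU, ← mul_sum, Complex.ofReal_inv,
          Complex.ofReal_natCast]

end UnitaryRepresentation

lemma foldl_mulVec_addChar {ι A R β : Type*} [Fintype ι] [DecidableEq ι] [AddCommMonoid A]
    [CommRing R] [StarRing R] (ρ : AddChar A (Matrix.unitaryGroup ι R)) (a : β → A) (l : List β)
    (v : ι → R) :
    l.foldl (fun ψ i => (ρ (a i) : Matrix ι ι R).mulVec ψ) v =
      (ρ (l.map a).sum : Matrix ι ι R).mulVec v := by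
  induction l generalizing v with
  | nil => simp
  | cons i l ih =>
    rw [List.foldl_cons, ih, Matrix.mulVec_mulVec, ← Matrix.UnitaryGroup.mul_val,
      List.map_cons, List.sum_cons, add_comm, AddChar.map_add_eq_mul]

namespace QOBDD

variable {n w : ℕ} {A : Type*}

/-- The QOBDD that applies `ρ (d i b)` on reading the value `b` of variable `i`, and accepts when
it is measured in its start state `s`. -/
def ofAddChar [AddMonoid A] (ρ : AddChar A (Matrix.unitaryGroup (Fin w) ℂ))
    (d : Fin n → Bool → A) (s : Fin w) : QOBDD n w where
  ord := 1
  G i b := ρ (d i b)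
  start := s
  acc := {s}

variable [AddCommMonoid A]

lemma finalVec_reorder_ofAddChar (ρ : AddChar A (Matrix.unitaryGroup (Fin w) ℂ))
    (d : Fin n → Bool → A) (s : Fin w) (π : Equiv.Perm (Fin n)) (x : Fin n → Bool) :
    ((ofAddChar ρ d s).reorder π).finalVec x =
      (ρ (∑ i, d i (x i)) : Matrix (Fin w) (Fin w) ℂ).col s := by
  have hsum : ((List.finRange n).map fun i => d (π i) (x (π i))).sum = ∑ i, d i (x i) := by
    rw [← Fin.sum_univ_def]
    exact Equiv.sum_comp π fun i => d i (x i)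
  rw [← Matrix.mulVec_single_one, ← hsum]
  exact foldl_mulVec_addChar ρ (fun i => d (π i) (x (π i))) _ _

lemma acceptProb_reorder_ofAddChar (ρ : AddChar A (Matrix.unitaryGroup (Fin w) ℂ))
    (d : Fin n → Bool → A) (s : Fin w) (π : Equiv.Perm (Fin n)) (x : Fin n → Bool) :
    ((ofAddChar ρ d s).reorder π).acceptProb x =
      Complex.normSq ((ρ (∑ i, d i (x i)) : Matrix (Fin w) (Fin w) ℂ) s s) := by
  rw [acceptProb, finalVec_reorder_ofAddChar]
  exact sum_singleton _ _

end QOBDD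

lemma exists_nat_four_mul_le_exp_and_le_log {N ε : ℝ} (hN : 1 ≤ N) (hε : 0 < ε) (hε1 : ε ≤ 1) :
    ∃ t : ℕ, 0 < t ∧ 4 * N ≤ Real.exp (t * (ε / 4)) ∧
      (t : ℝ) ≤ 10 * (1 / ε) * Real.log (2 * N) := by
  have log_four_mul : Real.log (4 * N) = Real.log 2 + Real.log (2 * N) := by
    rw [← Real.log_mul (by norm_num) (by positivity)]
    ring_nf
  have log_two_le : Real.log 2 ≤ Real.log (2 * N) :=
    Real.log_le_log (by norm_num) (by linarith)
  have log_four_mul_pos : 0 < Real.log (4 * N) := Real.log_pos (by linarith)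
  refine ⟨⌈4 * Real.log (4 * N) / ε⌉₊, Nat.ceil_pos.2 (by positivity), ?_, ?_⟩
  · have := (div_le_iff₀ hε).1 (Nat.le_ceil (4 * Real.log (4 * N) / ε))
    rw [← Real.log_le_iff_le_exp (by positivity)]
    linarith
  · calc (⌈4 * Real.log (4 * N) / ε⌉₊ : ℝ) ≤ 4 * Real.log (4 * N) / ε + 1 :=
          (Nat.ceil_lt_add_one (by positivity)).le
      _ = (4 * Real.log (4 * N) + ε) / ε := div_add_one hε.ne'
      _ ≤ 10 * Real.log (2 * N) / ε := by
          gcongr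
          linarith [Real.log_two_gt_d9]
      _ = 10 * (1 / ε) * Real.log (2 * N) := by ring

theorem stmt5_general {A : Type*} [AddCommGroup A] [Finite A] {n : ℕ}
    (f : (Fin n → Bool) → Bool) (d : Fin n → Bool → A)
    (hf : ∀ x, f x = true ↔ ∑ i, d i (x i) = 0) {ε : ℝ} (hε : 0 < ε) (hε1 : ε ≤ 1) :
    ∃ W : ℕ, (W : ℝ) ≤ 10 * (1 / ε) * Real.log (2 * (Nat.card A : ℝ)) ∧
      ∃ M : QOBDD n W,
        ∀ (π : Equiv.Perm (Fin n)) (x : Fin n → Bool),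
          (f x = true → (M.reorder π).acceptProb x = 1) ∧
          (f x = false → (M.reorder π).acceptProb x ≤ ε) := by
  obtain ⟨t, ht, hexp, hlog⟩ := exists_nat_four_mul_le_exp_and_le_log
    (N := Nat.card A) (by exact_mod_cast Nat.card_pos) hε hε1
  obtain ⟨k, hk⟩ := exists_forall_normSq_sum_addChar_le (κ := Fin t) hε (by simpa using hexp)
  obtain ⟨ρ, hρ⟩ := exists_addChar_unitaryGroup_apply_eq_average k ⟨0, ht⟩
  refine ⟨t, hlog, QOBDD.ofAddChar ρ d ⟨0, ht⟩, fun π x => ?_⟩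
  rw [QOBDD.acceptProb_reorder_ofAddChar]
  constructor
  · intro hx
    simp [(hf x).1 hx]
  · intro hx
    have hne : ∑ i, d i (x i) ≠ 0 := fun h0 => by simp [(hf x).2 h0] at hx
    have hle := hk _ hne
    rw [Fintype.card_fin] at hle
    rw [hρ, Fintype.card_fin, Complex.normSq_mul, Complex.normSq_inv, Complex.normSq_natCast,
      ← sq, inv_mul_le_iff₀ (by positivity), mul_comm]
    exact hle

/-- a function with a linear characteristic polynomial mod `w` has a
commutative one-sided-error quantum OBDD of width `O((1/ε)·ln(2w))`. -/
theorem stmt5 :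
    ∃ c : ℝ, 0 < c ∧
      ∀ (n w : ℕ), 1 ≤ n → 2 ≤ w →
        ∀ (f : (Fin n → Bool) → Bool) (C : Fin n → ℤ),
          (∀ x, f x = true ↔ (∑ i, C i * (if x i then 1 else 0)) % (w : ℤ) = 0) →
          ∀ ε : ℝ, 0 < ε → ε < 1 / 2 →
            ∃ W : ℕ, (W : ℝ) ≤ c * (1 / ε) * Real.log (2 * (w : ℝ)) ∧
              ∃ M : QOBDD n W,
                ∀ (π : Equiv.Perm (Fin n)) (x : Fin n → Bool),
                  (f x = true → (M.reorder π).acceptProb x = 1) ∧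
                  (f x = false → (M.reorder π).acceptProb x ≤ ε) := by
  refine ⟨10, by norm_num, fun n w _ hw f C hf ε hε hε2 => ?_⟩
  have : NeZero w := ⟨by omega⟩
  simpa only [Nat.card_zmod] using stmt5_general f
    (fun i b => ((C i * if b then 1 else 0 : ℤ) : ZMod w))
    (fun x => by rw [hf, ← Int.cast_sum, ZMod.intCast_zmod_eq_zero_iff_dvd,
      Int.dvd_iff_emod_eq_zero]) hε (by linarith)
end

section
/- There is a constant c such that for every integer q ≥ 1 there is a quantum OBDD of width at most c·q² that represents the partial function ⊕ord(EQ_q) with bounded error; namely, it accepts every input in the domain with value 1 with probability 1 and accepts every input in the domain with value 0 with probability at most 1/3. In terms of the input length n = 2q(⌈log₂ 2q⌉+1), the width is O(n²/log²n). -/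
set_option maxHeartbeats 1000000
/-- The equality function `EQ_q` on `2q` variables. -/
def EQF (q : ℕ) : (Fin (2 * q) → Bool) → Bool := fun x =>
  decide (∀ i : Fin q,
    x ⟨(i : ℕ), by have := i.isLt; omega⟩ = x ⟨q + (i : ℕ), by have := i.isLt; omega⟩)

/-! Fingerprinting: `X, Y ∈ {0,1}^q` agree iff every Walsh character is trivial on `v := X ∆ Y`.
Run `12 q` branches in uniform superposition, let branch `k` collect the phase
`∏ j, (-1)^(h k j * X j) * ∏ j, (-1)^(h k j * Y j) = walsh (h k) v`, and test for a return to the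
uniform superposition: the test accepts with probability `(𝔼 k, walsh (h k) v)²`, which is `1` if
`v = 0`. For fixed `v ≠ 0` and independent uniform `h k`, the signs `walsh (h k) v` are independent
of mean zero, so by Hoeffding's inequality the probability exceeds `1/3` for at most a fraction
`2 exp(-2q)` of all `h`. As `2^q * 2 exp(-2q) < 1`, one `h` works for all `v ≠ 0` at once.

A phase depends only on the variable that is read and on its value, never on the order of reading.
So for `⊕ord(EQ_q)` it suffices to read the address bits `z_i` before the value `y_i` and to keep
the XOR of the addresses read so far in a register of `⌈log₂ 2q⌉` bits, which costs a factor `O(q)`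
in the width. The register has the same content in all branches, hence is never entangled with
them and does not disturb their interference. -/

section Concentration

open MeasureTheory ProbabilityTheory

variable {Ω ι κ : Type*} [MeasurableSpace Ω] [Fintype κ]

theorem measureReal_le_sum_pi_le (μ : Measure Ω) [IsProbabilityMeasure μ] {f : Ω → ℝ}
    (hf : AEMeasurable f μ) (hbound : ∀ᵐ ω ∂μ, f ω ∈ Set.Icc (-1) 1) (hmean : μ[f] = 0)
    {ε : ℝ} (hε : 0 ≤ ε) :
    (Measure.pi fun _ : κ => μ).real {ω | Fintype.card κ * ε ≤ ∑ k, f (ω k)} ≤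
      Real.exp (-(Fintype.card κ * ε ^ 2) / 2) := by
  have hindep : iIndepFun (fun (k : κ) (ω : κ → Ω) => f (ω k)) (Measure.pi fun _ => μ) :=
    iIndepFun_pi fun _ => hf
  have hsub (k : κ) : HasSubgaussianMGF (fun ω : κ → Ω => f (ω k)) 1 (Measure.pi fun _ => μ) := by
    have heval := measurePreserving_eval (fun _ : κ => μ) k
    refine HasSubgaussianMGF.of_map (Y := fun ω : κ → Ω => ω k) (X := f)
      heval.measurable.aemeasurable ?_
    rw [heval.map_eq]
    convert! hasSubgaussianMGF_of_mem_Icc_of_integral_eq_zero hf hbound hmean using 1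
    ext
    norm_num
  refine (HasSubgaussianMGF.measure_sum_ge_le_of_iIndepFun hindep (s := Finset.univ)
    (fun k _ => hsub k) (by positivity)).trans_eq ?_
  congr 1
  rcases eq_or_ne (Fintype.card κ : ℝ) 0 with h | h
  · simp [h]
  · simp only [Finset.sum_const, Finset.card_univ, nsmul_eq_mul, mul_one, NNReal.coe_natCast]
    field_simp

theorem measureReal_le_abs_sum_pi_le (μ : Measure Ω) [IsProbabilityMeasure μ] {f : Ω → ℝ}
    (hf : AEMeasurable f μ) (hbound : ∀ᵐ ω ∂μ, f ω ∈ Set.Icc (-1) 1) (hmean : μ[f] = 0)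
    {ε : ℝ} (hε : 0 ≤ ε) :
    (Measure.pi fun _ : κ => μ).real {ω | Fintype.card κ * ε ≤ |∑ k, f (ω k)|} ≤
      2 * Real.exp (-(Fintype.card κ * ε ^ 2) / 2) := by
  have hneg := measureReal_le_sum_pi_le (κ := κ) μ (f := fun ω => -f ω) hf.neg
    (hbound.mono fun ω h => by simpa [and_comm, neg_le] using h)
    (by simp [integral_neg, hmean]) hε
  simp only [Finset.sum_neg_distrib] at hneg
  simp only [le_abs, Set.ofPred_or]
  linarith [measureReal_le_sum_pi_le (κ := κ) μ hf hbound hmean hε,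
    measureReal_union_le (μ := Measure.pi fun _ : κ => μ)
      {ω | Fintype.card κ * ε ≤ ∑ k, f (ω k)} {ω | Fintype.card κ * ε ≤ -∑ k, f (ω k)}]

theorem exists_sample_forall_abs_sum_lt (μ : Measure Ω) [IsProbabilityMeasure μ] (s : Finset ι)
    {f : ι → Ω → ℝ} (hf : ∀ i ∈ s, AEMeasurable (f i) μ)
    (hbound : ∀ i ∈ s, ∀ᵐ ω ∂μ, f i ω ∈ Set.Icc (-1) 1) (hmean : ∀ i ∈ s, μ[f i] = 0)
    {ε : ℝ} (hε : 0 ≤ ε)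
    (hcard : s.card * (2 * Real.exp (-(Fintype.card κ * ε ^ 2) / 2)) < 1) :
    ∃ ω : κ → Ω, ∀ i ∈ s, |∑ k, f i (ω k)| < Fintype.card κ * ε := by
  let bad (i : ι) : Set (κ → Ω) := {ω | Fintype.card κ * ε ≤ |∑ k, f i (ω k)|}
  have hbad : (Measure.pi fun _ : κ => μ).real (⋃ i ∈ s, bad i) < 1 :=
    calc (Measure.pi fun _ : κ => μ).real (⋃ i ∈ s, bad i)
        ≤ ∑ i ∈ s, (Measure.pi fun _ : κ => μ).real (bad i) :=
          measureReal_biUnion_finset_le s bad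
      _ ≤ ∑ _i ∈ s, 2 * Real.exp (-(Fintype.card κ * ε ^ 2) / 2) :=
          Finset.sum_le_sum fun i hi =>
            measureReal_le_abs_sum_pi_le μ (hf i hi) (hbound i hi) (hmean i hi) hε
      _ < 1 := by rwa [Finset.sum_const, nsmul_eq_mul]
  obtain ⟨ω, hω⟩ : ∃ ω, ω ∉ ⋃ i ∈ s, bad i := by
    by_contra! hall
    rw [Set.eq_univ_of_forall hall, probReal_univ] at hbad
    exact lt_irrefl _ hbad
  exact ⟨ω, by simpa [bad] using hω⟩

end Concentration

section Walsh

open MeasureTheory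
open scoped symmDiff BigOperators

/-- The sign `(-1)^b`. -/
def bitSign (b : Bool) : ℝ := if b then -1 else 1

/-- The Walsh character `v ↦ (-1)^⟨u, v⟩` of `{0,1}^ι`. The group operation on `{0,1}^ι`, bitwise
XOR, is written `∆`, and its neutral element `⊥`. -/
def walsh {ι : Type*} [Fintype ι] (u v : ι → Bool) : ℝ := ∏ j, bitSign (u j && v j)

variable {ι : Type*} [Fintype ι]

theorem abs_bitSign (b : Bool) : |bitSign b| = 1 := by
  cases b <;> simp [bitSign]

theorem bitSign_and_symmDiff (a b c : Bool) :
    bitSign (a && b ∆ c) = bitSign (a && b) * bitSign (a && c) := by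
  cases a <;> cases b <;> cases c <;> simp [bitSign]

theorem abs_walsh (u v : ι → Bool) : |walsh u v| = 1 := by
  simp [walsh, Finset.abs_prod, abs_bitSign]

theorem walsh_bot (u : ι → Bool) : walsh u ⊥ = 1 := by
  simp [walsh, bitSign]

theorem walsh_symmDiff (u v w : ι → Bool) : walsh u (v ∆ w) = walsh u v * walsh u w := by
  simp only [walsh, Pi.symmDiff_apply, bitSign_and_symmDiff, Finset.prod_mul_distrib]

theorem sum_walsh_eq_zero [DecidableEq ι] {v : ι → Bool} (hv : v ≠ ⊥) :
    ∑ u : ι → Bool, walsh u v = 0 := by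
  obtain ⟨j, hj⟩ := Function.ne_iff.mp hv
  simp only [walsh]
  rw [← Fintype.prod_sum fun j b => bitSign (b && v j)]
  exact Finset.prod_eq_zero (Finset.mem_univ j) (by simp_all [bitSign])

theorem two_pow_mul_two_mul_exp_lt_one {q : ℕ} (hq : 1 ≤ q) :
    (2 : ℝ) ^ q * (2 * Real.exp (-(2 * q))) < 1 :=
  calc (2 : ℝ) ^ q * (2 * Real.exp (-(2 * q)))
      = Real.exp ((q + 1) * Real.log 2 - 2 * q) := by
        rw [Real.exp_sub, Real.exp_neg, add_one_mul, Real.exp_add, Real.exp_nat_mul,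
          Real.exp_log two_pos]
        ring
    _ < 1 := by
        have : (1 : ℝ) ≤ q := by exact_mod_cast hq
        rw [Real.exp_lt_one_iff]
        nlinarith [Real.log_two_lt_d9]

theorem exists_sample_sq_expect_walsh_le {q : ℕ} (hq : 1 ≤ q) :
    ∃ h : Fin (12 * q) → Fin q → Bool, ∀ v ≠ ⊥, (𝔼 k, walsh (h k) v) ^ 2 ≤ 1 / 3 := by
  let := (⊤ : MeasurableSpace (Fin q → Bool))
  have : DiscreteMeasurableSpace (Fin q → Bool) := ⟨fun _ => trivial⟩
  let μ := (PMF.uniformOfFintype (Fin q → Bool)).toMeasure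
  let nonzero : Finset (Fin q → Bool) := Finset.univ.erase ⊥
  have hε : √(1 / 3 : ℝ) ^ 2 = 1 / 3 := Real.sq_sqrt (by norm_num)
  have hmean (v) (hv : v ∈ nonzero) : ∫ u, walsh u v ∂μ = 0 := by
    simp [μ, PMF.integral_eq_sum, ← Finset.mul_sum, sum_walsh_eq_zero (Finset.ne_of_mem_erase hv)]
  have hcard : (nonzero.card : ℝ) *
      (2 * Real.exp (-(Fintype.card (Fin (12 * q)) * √(1 / 3) ^ 2) / 2)) < 1 := by
    have hexponent : -((Fintype.card (Fin (12 * q)) : ℝ) * √(1 / 3) ^ 2) / 2 = -(2 * q) := by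
      rw [hε, Fintype.card_fin]
      push_cast
      ring
    have hcount : (nonzero.card : ℝ) ≤ 2 ^ q := by
      exact_mod_cast Finset.card_erase_le.trans (by simp)
    rw [hexponent]
    exact (mul_le_mul_of_nonneg_right hcount (by positivity)).trans_lt
      (two_pow_mul_two_mul_exp_lt_one hq)
  obtain ⟨h, hh⟩ := exists_sample_forall_abs_sum_lt (κ := Fin (12 * q)) μ nonzero
    (f := fun v u => walsh u v) (fun v _ => (measurable_of_finite _).aemeasurable)
    (fun v _ => .of_forall fun u => abs_le.mp (abs_walsh u v).le) hmean (Real.sqrt_nonneg _) hcard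
  refine ⟨h, fun v hv => ?_⟩
  have hpos : (0 : ℝ) < Fintype.card (Fin (12 * q)) := by
    rw [Fintype.card_fin]
    positivity
  rw [Fintype.expect_eq_sum_div_card, ← hε, sq_le_sq, abs_div, abs_of_pos hpos,
    abs_of_nonneg (Real.sqrt_nonneg _), div_le_iff₀' hpos]
  exact (hh v (by simpa [nonzero] using hv)).le

end Walsh

section Unitary

open Matrix

variable {ι : Type*} [Fintype ι] [DecidableEq ι]

theorem permMatrix_mem_unitaryGroup (σ : Equiv.Perm ι) :
    σ.permMatrix ℂ ∈ unitaryGroup ι ℂ := by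
  rw [mem_unitaryGroup_iff, star_eq_conjTranspose, conjTranspose_permMatrix, ← permMatrix_mul,
    inv_mul_cancel, permMatrix_one]

theorem diagonal_mem_unitaryGroup {d : ι → ℂ} (hd : ∀ i, ‖d i‖ = 1) :
    diagonal d ∈ unitaryGroup ι ℂ := by
  rw [mem_unitaryGroup_iff, star_eq_conjTranspose, diagonal_conjTranspose, diagonal_mul_diagonal,
    ← diagonal_one]
  congr 1
  ext i
  simp [Complex.mul_conj, Complex.normSq_eq_norm_sq, hd]

theorem submatrix_equiv_mem_unitaryGroup {κ : Type*} [Fintype κ] [DecidableEq κ] (e : κ ≃ ι)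
    {U : Matrix ι ι ℂ} (hU : U ∈ unitaryGroup ι ℂ) : U.submatrix e e ∈ unitaryGroup κ ℂ := by
  rw [mem_unitaryGroup_iff, star_eq_conjTranspose, conjTranspose_submatrix, submatrix_mul_equiv,
    ← star_eq_conjTranspose, mem_unitaryGroup_iff.mp hU, submatrix_one_equiv]

theorem exists_unitary_mulVec_single_eq (i₀ : ι) {v : ι → ℂ} (hv : ∑ i, ‖v i‖ ^ 2 = 1) :
    ∃ U : unitaryGroup ι ℂ, (U : Matrix ι ι ℂ) *ᵥ Pi.single i₀ 1 = v := by
  let w : EuclideanSpace ℂ ι := WithLp.toLp 2 v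
  have hw : ‖w‖ = 1 := by
    simp [w, EuclideanSpace.norm_eq, hv]
  have hon : Orthonormal ℂ (({i₀} : Set ι).domRestrict fun _ => w) :=
    ⟨fun _ => hw, Subsingleton.pairwise⟩
  obtain ⟨b, hb⟩ := hon.exists_orthonormalBasis_extension_of_card_eq (by simp)
  refine ⟨⟨(EuclideanSpace.basisFun ι ℂ).toBasis.toMatrix b,
    (EuclideanSpace.basisFun ι ℂ).toMatrix_orthonormalBasis_mem_unitary b⟩, ?_⟩
  ext i
  simp [Module.Basis.toMatrix_apply, hb i₀ rfl, w]

end Unitary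

theorem foldl_finRange_eq_last {V : Type*} {n : ℕ} (step : V → Fin n → V) (S : Fin (n + 1) → V)
    (hS : ∀ i, step (S i.castSucc) i = S i.succ) :
    (List.finRange n).foldl step (S 0) = S (Fin.last n) := by
  induction n with
  | zero => simp
  | succ n ih =>
    rw [List.finRange_succ_last, List.foldl_append, List.foldl_map, ← Fin.castSucc_zero,
      ih (fun v i => step v i.castSucc) (fun p => S p.castSucc) fun i => hS i.castSucc]
    exact hS (Fin.last n)

namespace QOBDD

open Matrix

variable {ι : Type*} [Fintype ι] [DecidableEq ι] {n : ℕ}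

/-- The quantum OBDD whose basis states are labelled by a finite type `ι` instead of `Fin w`. -/
noncomputable def ofGates (ord : Equiv.Perm (Fin n)) (D : Fin n → Bool → unitaryGroup ι ℂ)
    (start : ι) (acc : Finset ι) : QOBDD n (Fintype.card ι) where
  ord := ord
  G i b := ⟨(D i b : Matrix ι ι ℂ).submatrix (Fintype.equivFin ι).symm (Fintype.equivFin ι).symm,
    submatrix_equiv_mem_unitaryGroup _ (D i b).2⟩
  start := Fintype.equivFin ι start
  acc := acc.map (Fintype.equivFin ι).toEmbedding

theorem finalVec_ofGates (ord : Equiv.Perm (Fin n)) (D : Fin n → Bool → unitaryGroup ι ℂ)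
    (start : ι) (acc : Finset ι) (x : Fin n → Bool) (S : Fin (n + 1) → ι → ℂ)
    (hstart : S 0 = Pi.single start 1)
    (hstep : ∀ i, (D i (x (ord i)) : Matrix ι ι ℂ) *ᵥ S i.castSucc = S i.succ) :
    (ofGates ord D start acc).finalVec x = S (Fin.last n) ∘ (Fintype.equivFin ι).symm := by
  have hinit : (Pi.single (Fintype.equivFin ι start) 1 : Fin (Fintype.card ι) → ℂ) =
      S 0 ∘ (Fintype.equivFin ι).symm := by
    ext i
    simp [hstart, Pi.single_apply, Equiv.symm_apply_eq]
  simp only [finalVec, ofGates, hinit]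
  refine foldl_finRange_eq_last _ (fun p => S p ∘ (Fintype.equivFin ι).symm) fun i => ?_
  rw [submatrix_mulVec_equiv, ← hstep]
  simp [Function.comp_assoc]

theorem acceptProb_ofGates (ord : Equiv.Perm (Fin n)) (D : Fin n → Bool → unitaryGroup ι ℂ)
    (start : ι) (acc : Finset ι) (x : Fin n → Bool) (S : Fin (n + 1) → ι → ℂ)
    (hstart : S 0 = Pi.single start 1)
    (hstep : ∀ i, (D i (x (ord i)) : Matrix ι ι ℂ) *ᵥ S i.castSucc = S i.succ) :
    (ofGates ord D start acc).acceptProb x = ∑ j ∈ acc, ‖S (Fin.last n) j‖ ^ 2 := by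
  rw [acceptProb, finalVec_ofGates ord D start acc x S hstart hstep]
  simp [ofGates, Complex.normSq_eq_norm_sq]

end QOBDD

section Branch

open Matrix
open scoped Kronecker

/-- The superposition `∑ k, w k |k, a⟩` of branches `k` that share the register content `a`. -/
def branchState {K A : Type*} [DecidableEq A] (w : K → ℂ) (a : A) : K × A → ℂ :=
  fun r => if r.2 = a then w r.1 else 0

/-- The gate `|k, a⟩ ↦ φ k a |k, a + g⟩`, which updates the register and lets each branch collect
a phase. -/
def phaseShiftGate {K A : Type*} [Fintype K] [DecidableEq K] [Fintype A] [DecidableEq A]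
    [AddGroup A] (φ : K → A → ℂ) (g : A) : Matrix (K × A) (K × A) ℂ :=
  Equiv.Perm.permMatrix ℂ (Equiv.prodCongr (Equiv.refl K) (Equiv.subRight g)) *
    diagonal fun r => φ r.1 r.2

variable {K A : Type*} [DecidableEq A]

theorem single_eq_branchState [DecidableEq K] (k : K) (a : A) :
    (Pi.single (k, a) 1 : K × A → ℂ) = branchState (Pi.single k 1) a := by
  ext ⟨k', a'⟩
  simp [branchState, Pi.single_apply, Prod.ext_iff, ← ite_and, and_comm]

variable [Fintype K] [Fintype A]

theorem sum_sq_norm_branchState [DecidableEq K] (k : K) (w : K → ℂ) (a : A) :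
    ∑ r : K × A with r.1 = k, ‖branchState w a r‖ ^ 2 = ‖w k‖ ^ 2 := by
  simp [branchState, Finset.sum_filter, Fintype.sum_prod_type, apply_ite]

theorem kronecker_one_mulVec_branchState (U : Matrix K K ℂ) (w : K → ℂ) (a : A) :
    (U ⊗ₖ (1 : Matrix A A ℂ)) *ᵥ branchState w a = branchState (U *ᵥ w) a := by
  ext ⟨k, a'⟩
  simp [branchState, mulVec, dotProduct, Fintype.sum_prod_type, one_apply]

variable [DecidableEq K] [AddGroup A]

theorem phaseShiftGate_mem_unitaryGroup {φ : K → A → ℂ} (hφ : ∀ k a, ‖φ k a‖ = 1) (g : A) :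
    phaseShiftGate φ g ∈ unitaryGroup (K × A) ℂ :=
  mul_mem (permMatrix_mem_unitaryGroup _) (diagonal_mem_unitaryGroup fun r => hφ r.1 r.2)

theorem phaseShiftGate_mulVec_branchState (φ : K → A → ℂ) (g : A) (w : K → ℂ) (a : A) :
    phaseShiftGate φ g *ᵥ branchState w a = branchState (fun k => w k * φ k a) (a + g) := by
  ext ⟨k, a'⟩
  by_cases h : a' = a + g <;>
    simp [phaseShiftGate, ← mulVec_mulVec, permMatrix_mulVec, mulVec_diagonal, branchState,
      sub_eq_iff_eq_add, h, mul_comm]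

theorem conj_phaseShiftGate_mulVec_branchState (U : unitaryGroup K ℂ) (φ : K → A → ℂ) (g : A)
    (w : K → ℂ) (a : A) :
    (star (U.1 ⊗ₖ (1 : Matrix A A ℂ)) * phaseShiftGate φ g * (U.1 ⊗ₖ 1)) *ᵥ
        branchState (star U.1 *ᵥ w) a =
      branchState (star U.1 *ᵥ fun k => w k * φ k a) (a + g) := by
  have hstar : star (U.1 ⊗ₖ (1 : Matrix A A ℂ)) = star U.1 ⊗ₖ 1 := by
    simp [star_eq_conjTranspose, conjTranspose_kronecker]
  have hcancel : U.1 *ᵥ star U.1 *ᵥ w = w := by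
    rw [mulVec_mulVec, mem_unitaryGroup_iff.mp U.2, one_mulVec]
  rw [hstar, ← mulVec_mulVec, ← mulVec_mulVec, kronecker_one_mulVec_branchState, hcancel,
    phaseShiftGate_mulVec_branchState, kronecker_one_mulVec_branchState]

end Branch

theorem partialSum_castSucc_eq_sum_Iio {A : Type*} [AddCommMonoid A] {n : ℕ} (f : Fin n → A)
    (i : Fin n) : Fin.partialSum f i.castSucc = ∑ j ∈ Finset.Iio i, f j := by
  rw [Fin.partialSum, List.sum_take_ofFn]
  congr 1
  ext j
  simp

theorem partialProd_last {A : Type*} [CommMonoid A] {n : ℕ} (f : Fin n → A) :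
    Fin.partialProd f (Fin.last n) = ∏ j, f j := by
  rw [Fin.partialProd, List.prod_take_ofFn]
  simp

namespace QOBDD

open Matrix
open scoped Kronecker BigOperators

variable {K A : Type*} [Fintype K] [Fintype A] [AddCommGroup A] {n : ℕ}

/-- The circuit that turns `|k₀, 0⟩` into the superposition `U |k₀⟩` of branches, applies to it the
gates `|k, a⟩ ↦ φ i b k a |k, a + g i b⟩`, and accepts if undoing `U` leads back to branch `k₀`.
As `U` belongs to no input variable, every gate is conjugated by it. -/
noncomputable def branchCircuit [DecidableEq K] [DecidableEq A] (ord : Equiv.Perm (Fin n))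
    (U : unitaryGroup K ℂ) (k₀ : K) (g : Fin n → Bool → A) {φ : Fin n → Bool → K → A → ℂ}
    (hφ : ∀ i b k a, ‖φ i b k a‖ = 1) : QOBDD n (Fintype.card (K × A)) :=
  let V : unitaryGroup (K × A) ℂ := ⟨U.1 ⊗ₖ 1, kronecker_mem_unitary U.2 (one_mem _)⟩
  ofGates ord
    (fun i b => V⁻¹ * ⟨phaseShiftGate (φ i b) (g i b), phaseShiftGate_mem_unitaryGroup (hφ i b) _⟩
      * V)
    (k₀, 0) {r | r.1 = k₀}

theorem acceptProb_branchCircuit [DecidableEq K] [DecidableEq A] (ord : Equiv.Perm (Fin n))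
    (U : unitaryGroup K ℂ) (k₀ : K) (g : Fin n → Bool → A) {φ : Fin n → Bool → K → A → ℂ}
    (hφ : ∀ i b k a, ‖φ i b k a‖ = 1) (x : Fin n → Bool) :
    (branchCircuit ord U k₀ g hφ).acceptProb x = ‖∑ k, star (U.1 k k₀) * (U.1 k k₀ *
      ∏ i, φ i (x (ord i)) k (∑ j ∈ Finset.Iio i, g j (x (ord j))))‖ ^ 2 := by
  let a (p : Fin (n + 1)) : A := Fin.partialSum (fun i => g i (x (ord i))) p
  let w (p : Fin (n + 1)) (k : K) : ℂ :=
    U.1 k k₀ * Fin.partialProd (fun i => φ i (x (ord i)) k (a i.castSucc)) p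
  have hstart : branchState (star U.1 *ᵥ w 0) (a 0) = Pi.single (k₀, 0) 1 := by
    have hw : w 0 = U.1 *ᵥ Pi.single k₀ 1 := by
      ext
      simp [w]
    have ha : a 0 = 0 := Fin.partialSum_zero _
    rw [hw, ha, mulVec_mulVec, mem_unitaryGroup_iff'.mp U.2, one_mulVec, single_eq_branchState]
  have hw (i : Fin n) :
      w i.succ = fun k => w i.castSucc k * φ i (x (ord i)) k (a i.castSucc) := by
    ext k
    simp only [w, Fin.partialProd_succ, mul_assoc]
  have ha (i : Fin n) : a i.succ = a i.castSucc + g i (x (ord i)) := Fin.partialSum_succ _ i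
  rw [branchCircuit,
    acceptProb_ofGates _ _ _ _ x (fun p => branchState (star U.1 *ᵥ w p) (a p)) hstart fun i => ?_,
    sum_sq_norm_branchState]
  · simp only [mulVec, dotProduct, star_apply, w, partialProd_last, a,
      partialSum_castSucc_eq_sum_Iio]
  · rw [hw, ha]
    exact conj_phaseShiftGate_mulVec_branchState U _ _ _ _

theorem exists_acceptProb_eq_sq_norm_expect [Nonempty K] (ord : Equiv.Perm (Fin n))
    (g : Fin n → Bool → A) {φ : Fin n → Bool → K → A → ℂ} (hφ : ∀ i b k a, ‖φ i b k a‖ = 1) :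
    ∃ M : QOBDD n (Fintype.card (K × A)), ∀ x, M.acceptProb x =
      ‖𝔼 k, ∏ i, φ i (x (ord i)) k (∑ j ∈ Finset.Iio i, g j (x (ord j)))‖ ^ 2 := by
  classical
  obtain ⟨k₀⟩ := ‹Nonempty K›
  let c : ℝ := (√(Fintype.card K))⁻¹
  have hc : c * c = (Fintype.card K : ℝ)⁻¹ := by simp [c, ← mul_inv]
  obtain ⟨U, hU⟩ := exists_unitary_mulVec_single_eq k₀ (v := fun _ => (c : ℂ))
    (by simp [sq, hc])
  have hcol (k : K) : U.1 k k₀ = c := by simpa using congrFun hU k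
  refine ⟨branchCircuit ord U k₀ g hφ, fun x => ?_⟩
  have hcC : (c : ℂ) * c = (Fintype.card K : ℂ)⁻¹ := by
    rw [← Complex.ofReal_mul, hc, Complex.ofReal_inv, Complex.ofReal_natCast]
  simp only [acceptProb_branchCircuit, hcol, Complex.star_def, Complex.conj_ofReal, ← mul_assoc,
    hcC]
  rw [← Finset.mul_sum, Fintype.expect_eq_sum_div_card, div_eq_inv_mul]

end QOBDD

section Interleaving
variable {Q l : ℕ}

/-- The position of the input variable with label `(i, r)`: it is `z_{i, r}` when `r < l` and `y_i`
when `r = l`. -/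
def inputIndex (Q l : ℕ) : Fin Q × Fin (l + 1) ≃ Fin (Q * (l + 1)) :=
  (Equiv.prodCongr (Equiv.refl _) finSumFinEquiv.symm).trans <|
    (Equiv.prodSumDistrib (Fin Q) (Fin l) (Fin 1)).trans <|
      (Equiv.sumCongr finProdFinEquiv (Equiv.prodUnique _ _)).trans finSumFinEquiv

theorem apply_inputIndex_castSucc (x : Fin (Q * (l + 1)) → Bool) (i : Fin Q) (j : Fin l) :
    x (inputIndex Q l (i, j.castSucc)) = zOf Q l x i j := by
  have hsymm : finSumFinEquiv.symm j.castSucc = (Sum.inl j : Fin l ⊕ Fin 1) :=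
    finSumFinEquiv_symm_apply_castAdd j
  have hindex : inputIndex Q l (i, j.castSucc) =
      finSumFinEquiv (Sum.inl (finProdFinEquiv (i, j)) : Fin (Q * l) ⊕ Fin Q) := by
    simp only [inputIndex, Equiv.trans_apply, Equiv.prodCongr_apply, Prod.map, hsymm]
    rfl
  refine congrArg x (Fin.ext ?_)
  rw [hindex, finSumFinEquiv_apply_left, Fin.val_castAdd, finProdFinEquiv_apply_val]
  ring

theorem apply_inputIndex_last (x : Fin (Q * (l + 1)) → Bool) (i : Fin Q) :
    x (inputIndex Q l (i, Fin.last l)) = yOf Q l x i := by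
  have hsymm : finSumFinEquiv.symm (Fin.last l) = (Sum.inr 0 : Fin l ⊕ Fin 1) :=
    finSumFinEquiv_symm_last
  have hindex : inputIndex Q l (i, Fin.last l) =
      finSumFinEquiv (Sum.inr i : Fin (Q * l) ⊕ Fin Q) := by
    simp only [inputIndex, Equiv.trans_apply, Equiv.prodCongr_apply, Prod.map, hsymm]
    rfl
  rw [hindex, finSumFinEquiv_apply_right]
  rfl

/-- The variable order `z_{1,1}, …, z_{1,l}, y_1, z_{2,1}, …, z_{2,l}, y_2, …`. -/
def interleavedOrder (Q l : ℕ) : Equiv.Perm (Fin (Q * (l + 1))) :=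
  finProdFinEquiv.symm.trans (inputIndex Q l)

theorem interleavedOrder_finProdFinEquiv (p : Fin Q × Fin (l + 1)) :
    interleavedOrder Q l (finProdFinEquiv p) = inputIndex Q l p := by
  simp [interleavedOrder, -finProdFinEquiv_symm_apply]

theorem modNat_finProdFinEquiv {m n : ℕ} (i : Fin m) (r : Fin n) :
    (finProdFinEquiv (i, r)).modNat = r :=
  congrArg Prod.snd (finProdFinEquiv.symm_apply_apply (i, r))

theorem finProdFinEquiv_le_last_iff (i i' : Fin Q) (r : Fin (l + 1)) :
    finProdFinEquiv (i', r) ≤ finProdFinEquiv (i, Fin.last l) ↔ i' ≤ i := by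
  simp only [Fin.le_def, finProdFinEquiv_apply_val, Fin.val_last]
  constructor <;> intro h <;> nlinarith [r.is_le]

theorem sum_Iic_finProdFinEquiv_last {A : Type*} [AddCommMonoid A] (F : Fin (Q * (l + 1)) → A)
    (i : Fin Q) :
    ∑ p ∈ Finset.Iic (finProdFinEquiv (i, Fin.last l)), F p =
      ∑ i' ∈ Finset.Iic i, ∑ r, F (finProdFinEquiv (i', r)) := by
  rw [← Finset.sum_product']
  refine (Finset.sum_equiv finProdFinEquiv ?_ fun _ _ => rfl).symm
  simp [finProdFinEquiv_le_last_iff]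

/-- The bits of a vector over `ZMod 2`, in which group addition is bitwise XOR. -/
def toBits (a : Fin l → ZMod 2) : Fin l → Bool := fun j => decide (a j = 1)

theorem toBits_sum_Iic_eq_xorZ (x : Fin (Q * (l + 1)) → Bool) (i : Fin Q) :
    toBits (∑ i' ∈ Finset.Iic i, fun j => ((zOf Q l x i' j).toNat : ZMod 2)) = xorZ Q l x i := by
  ext j
  have hcount : ∑ i' ∈ Finset.Iic i, (zOf Q l x i' j).toNat =
      (Finset.univ.filter fun i' => i' ≤ i ∧ zOf Q l x i' j = true).card := by
    rw [← Finset.filter_filter, Finset.card_filter]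
    exact Finset.sum_congr (by ext; simp) fun i' _ => by cases zOf Q l x i' j <;> rfl
  refine decide_eq_decide.mpr ?_
  rw [Finset.sum_apply, ← Nat.cast_sum, hcount, ZMod.natCast_eq_one_iff_odd, Nat.odd_iff]

/-- The summand added to the address register when the variable with label `(i, r)` has value `b`:
`b` in coordinate `r` for `z_{i, r}`, and nothing for `y_i`. -/
def addressIncrement (r : Fin (l + 1)) (b : Bool) : Fin l → ZMod 2 :=
  Fin.lastCases 0 (fun j => Pi.single j (b.toNat : ZMod 2)) r

/-- The phase contributed by the variable with label `(i, r)` when it has value `b`: `s a b` for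
`y_i` read at address `a`, and none for `z_{i, r}`. -/
def valuePhase (s : (Fin l → Bool) → Bool → ℂ) (r : Fin (l + 1)) (b : Bool)
    (a : Fin l → ZMod 2) : ℂ :=
  Fin.lastCases (s (toBits a) b) (fun _ => 1) r

theorem norm_valuePhase {s : (Fin l → Bool) → Bool → ℂ} (hs : ∀ a b, ‖s a b‖ = 1)
    (r : Fin (l + 1)) (b : Bool) (a : Fin l → ZMod 2) : ‖valuePhase s r b a‖ = 1 := by
  cases r using Fin.lastCases <;> simp [valuePhase, hs]

theorem sum_addressIncrement (x : Fin (Q * (l + 1)) → Bool) (i : Fin Q) :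
    ∑ r, addressIncrement r (x (inputIndex Q l (i, r))) =
      fun j => ((zOf Q l x i j).toNat : ZMod 2) := by
  simp only [Fin.sum_univ_castSucc, addressIncrement, Fin.lastCases_castSucc, Fin.lastCases_last,
    apply_inputIndex_castSucc, add_zero]
  exact Finset.univ_sum_single _

theorem prod_valuePhase (s : (Fin l → Bool) → Bool → ℂ) (x : Fin (Q * (l + 1)) → Bool) (i : Fin Q)
    (a : Fin (l + 1) → Fin l → ZMod 2) :
    ∏ r, valuePhase s r (x (inputIndex Q l (i, r))) (a r) =
      s (toBits (a (Fin.last l))) (yOf Q l x i) := by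
  simp [Fin.prod_univ_castSucc, valuePhase, apply_inputIndex_last]

theorem toBits_sum_addressIncrement (x : Fin (Q * (l + 1)) → Bool) (i : Fin Q) :
    toBits (∑ p ∈ Finset.Iio (finProdFinEquiv (i, Fin.last l)),
      addressIncrement p.modNat (x (interleavedOrder Q l p))) = xorZ Q l x i := by
  have hlast (b : Bool) :
      addressIncrement (finProdFinEquiv (i, Fin.last l)).modNat b = 0 := by
    rw [modNat_finProdFinEquiv, addressIncrement, Fin.lastCases_last]
  rw [← toBits_sum_Iic_eq_xorZ, ← add_zero (∑ p ∈ Finset.Iio _, _), ← hlast,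
    Finset.sum_Iio_add_eq_sum_Iic, sum_Iic_finProdFinEquiv_last]
  simp only [interleavedOrder_finProdFinEquiv, modNat_finProdFinEquiv, sum_addressIncrement]
end Interleaving

section XorReordering

open scoped BigOperators

theorem exists_QOBDD_acceptProb_eq_xorZ {K : Type*} [Fintype K] [Nonempty K] (Q l : ℕ)
    {s : K → (Fin l → Bool) → Bool → ℂ} (hs : ∀ k a b, ‖s k a b‖ = 1) :
    ∃ M : QOBDD (Q * (l + 1)) (Fintype.card K * 2 ^ l), ∀ x,
      M.acceptProb x = ‖𝔼 k, ∏ i, s k (xorZ Q l x i) (yOf Q l x i)‖ ^ 2 := by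
  have hwidth : Fintype.card K * 2 ^ l = Fintype.card (K × (Fin l → ZMod 2)) := by simp
  obtain ⟨M, hM⟩ := QOBDD.exists_acceptProb_eq_sq_norm_expect (interleavedOrder Q l)
    (fun p => addressIncrement p.modNat) (φ := fun p b k => valuePhase (s k) p.modNat b)
    fun p b k => norm_valuePhase (hs k) p.modNat b
  rw [hwidth]
  refine ⟨M, fun x => ?_⟩
  simp_rw [hM, ← finProdFinEquiv.prod_comp, Fintype.prod_prod_type, modNat_finProdFinEquiv,
    interleavedOrder_finProdFinEquiv, prod_valuePhase, toBits_sum_addressIncrement]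

theorem exists_perm_of_ordPartial_eq_some {Q l : ℕ} {f : (Fin Q → Bool) → Bool}
    {addr : (Fin (Q * (l + 1)) → Bool) → Fin Q → ℕ} {x : Fin (Q * (l + 1)) → Bool} {b : Bool}
    (h : ordPartial Q l f addr x = some b) :
    ∃ σ : Equiv.Perm (Fin Q),
      (∀ i, addr x i = σ i) ∧ f (fun j => yOf Q l x (σ.symm j)) = b := by
  unfold ordPartial at h
  split_ifs at h with hσ
  exact ⟨hσ.choose, hσ.choose_spec, Option.some_inj.mp h⟩

theorem exists_QOBDD_acceptProb_eq_of_xorOrdF {K : Type*} [Fintype K] [Nonempty K] {Q : ℕ}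
    [NeZero Q] {s : K → Fin Q → Bool → ℂ} (hs : ∀ k j b, ‖s k j b‖ = 1) :
    ∃ M : QOBDD (Q * (Nat.clog 2 Q + 1)) (Fintype.card K * 2 ^ Nat.clog 2 Q),
      ∀ f x b, xorOrdF Q f x = some b →
        ∃ X, f X = b ∧ M.acceptProb x = ‖𝔼 k, ∏ j, s k j (X j)‖ ^ 2 := by
  obtain ⟨M, hM⟩ := exists_QOBDD_acceptProb_eq_xorZ Q (Nat.clog 2 Q)
    (s := fun k a => s k (Fin.ofNat Q (binVal _ a))) fun k a => hs k _
  refine ⟨M, fun f x b hx => ?_⟩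
  obtain ⟨σ, hσ, hf⟩ := exists_perm_of_ordPartial_eq_some hx
  have haddr (i : Fin Q) : Fin.ofNat Q (binVal _ (xorZ Q _ x i)) = σ i := by
    rw [← addrXor, hσ, Fin.ofNat_val_eq_self]
  have hreindex (k : K) : ∏ i, s k (σ i) (yOf Q _ x i) = ∏ j, s k j (yOf Q _ x (σ.symm j)) :=
    Fintype.prod_equiv σ _ _ fun i => by rw [σ.symm_apply_apply]
  exact ⟨_, hf, by simp only [hM, haddr, hreindex]⟩

end XorReordering

section Equality

open scoped symmDiff BigOperators

variable {q : ℕ}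

/-- The half `x` (for `a = 0`) or `y` (for `a = 1`) of an input `(x, y)` of `EQ_q`. -/
def half (a : Fin 2) (X : Fin (2 * q) → Bool) : Fin q → Bool := fun i => X (finProdFinEquiv (a, i))

theorem EQF_eq_true_iff (X : Fin (2 * q) → Bool) : EQF q X = true ↔ half 0 X = half 1 X := by
  simp [EQF, half, funext_iff, finProdFinEquiv, add_comm]

theorem prod_bitSign_modNat_eq_walsh (u : Fin q → Bool) (X : Fin (2 * q) → Bool) :
    ∏ j, bitSign (u j.modNat && X j) = walsh u (half 0 X ∆ half 1 X) := by
  rw [← finProdFinEquiv.prod_comp, Fintype.prod_prod_type, Fin.prod_univ_two, walsh_symmDiff]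
  simp only [modNat_finProdFinEquiv]
  rfl

theorem exists_QOBDD_acceptProb_eq_sq_expect_walsh {K : Type*} [Fintype K] [Nonempty K] [NeZero q]
    (h : K → Fin q → Bool) :
    ∃ M : QOBDD (2 * q * (Nat.clog 2 (2 * q) + 1)) (Fintype.card K * 2 ^ Nat.clog 2 (2 * q)),
      ∀ x b, xorOrdF (2 * q) (EQF q) x = some b →
        ∃ v, (b = true ↔ v = ⊥) ∧ M.acceptProb x = (𝔼 k, walsh (h k) v) ^ 2 := by
  obtain ⟨M, hM⟩ := exists_QOBDD_acceptProb_eq_of_xorOrdF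
    (s := fun k (j : Fin (2 * q)) b => (bitSign (h k j.modNat && b) : ℂ))
    fun k j b => by rw [Complex.norm_real, Real.norm_eq_abs, abs_bitSign]
  refine ⟨M, fun x b hx => ?_⟩
  obtain ⟨X, rfl, hacc⟩ := hM _ x b hx
  refine ⟨half 0 X ∆ half 1 X, by rw [EQF_eq_true_iff, symmDiff_eq_bot], ?_⟩
  simp only [hacc, ← Complex.ofReal_prod, ← Complex.ofReal_expect, Complex.norm_real,
    Real.norm_eq_abs, sq_abs, prod_bitSign_modNat_eq_walsh]

theorem two_pow_clog_le_two_mul {n : ℕ} (hn : 1 < n) : 2 ^ Nat.clog 2 n ≤ 2 * n := by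
  have hlt := Nat.pow_pred_clog_lt_self one_lt_two hn
  rw [← Nat.succ_pred_eq_of_pos (Nat.clog_pos one_lt_two hn), pow_succ']
  omega

end Equality

/-- `⊕ord(EQ_q)` has a one-sided bounded-error QOBDD of width `O(q²)`. -/
theorem stmt8 :
    ∃ c : ℕ, 0 < c ∧
      ∀ q : ℕ, 1 ≤ q →
        ∃ W : ℕ, W ≤ c * q ^ 2 ∧
          ∃ M : QOBDD (2 * q * (Nat.clog 2 (2 * q) + 1)) W,
            ∀ x, (xorOrdF (2 * q) (EQF q) x = some true → M.acceptProb x = 1) ∧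
                 (xorOrdF (2 * q) (EQF q) x = some false → M.acceptProb x ≤ 1 / 3) := by
  refine ⟨48, by norm_num, fun q hq => ?_⟩
  have : NeZero q := ⟨by omega⟩
  obtain ⟨h, hh⟩ := exists_sample_sq_expect_walsh_le hq
  obtain ⟨M, hM⟩ := exists_QOBDD_acceptProb_eq_sq_expect_walsh h
  refine ⟨_, ?_, M, fun x => ⟨fun hx => ?_, fun hx => ?_⟩⟩
  · have hclog := two_pow_clog_le_two_mul (n := 2 * q) (by omega)
    rw [Fintype.card_fin]
    nlinarith
  · obtain ⟨v, hv, hacc⟩ := hM x true hx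
    simp [hacc, hv.mp rfl, walsh_bot]
  · obtain ⟨v, hv, hacc⟩ := hM x false hx
    rw [hacc]
    exact hh v fun hbot => by simpa using hv.mpr hbot
end
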